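/- arXiv:2108.11313 — 4 statements merged into one kernel-verified Lean document; each statement's English description precedes it below -/
import Mathlib

section
/- Every symmetric cyclic Abelian class over a finite ordered alphabet contains at least one singular cyclic word, i.e., for every Parikh vector there exists a cyclic word ω with that Parikh vector such that every factorization ω = uv into nonempty non-palindromes is synchronizing. -/
/-- The lexicographic order on words induced by the order of the alphabet, with the
convention that `u ≺ v` whenever `v` is a proper prefix of `u`. -/
def wlt {A : Type*} [LinearOrder A] (u v : List A) : Prop :=
  (v ≠ u ∧ v <+: u) ∨
    ∃ (p s t : List A) (x y : A), x < y ∧ u = p ++ x :: s ∧ v = p ++ y :: t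

/-- The alternating lexicographic order on words: at the first difference, the order of
letters is used at even (0-based) positions and reversed at odd positions; if `v` is a
proper prefix of `u` then `u ≺_alt v` when `|v|` is even and `v ≺_alt u` when `|v|` is odd. -/
def altlt {A : Type*} [LinearOrder A] (u v : List A) : Prop :=
  (v ≠ u ∧ v <+: u ∧ Even v.length) ∨ (u ≠ v ∧ u <+: v ∧ Odd u.length) ∨
    ∃ (p s t : List A) (x y : A), u = p ++ x :: s ∧ v = p ++ y :: t ∧
      ((Even p.length ∧ x < y) ∨ (Odd p.length ∧ y < x))

/-- `r` is a linear representation (rotation) of the cyclic word represented by `w`. -/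
def isRot {A : Type*} (w r : List A) : Prop := ∃ s t : List A, w = s ++ t ∧ r = t ++ s

/-- `f` is a factor of the cyclic word represented by `w`. -/
def isCFactor {A : Type*} (f w : List A) : Prop := ∃ r : List A, isRot w r ∧ f <:+: r

/-- The cyclic word represented by `w` is singular: every factorization of it into two
nonempty non-palindromes `u`, `v` is synchronizing (`u ≺ u*` iff `v ≺ v*`). -/
def cyclicSingular {A : Type*} [LinearOrder A] (w : List A) : Prop :=
  ∀ u v : List A, u ≠ [] → v ≠ [] → isRot w (u ++ v) →
    u ≠ u.reverse → v ≠ v.reverse → (wlt u u.reverse ↔ wlt v v.reverse)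

/-- `δ_b(w) = Σ_{c>b} |w|_c − Σ_{a<b} |w|_a`. -/
def deltaW {A : Type*} [LinearOrder A] [Fintype A] (w : List A) (b : A) : ℤ :=
  (∑ c ∈ Finset.univ.filter (fun c => b < c), (w.count c : ℤ)) -
    (∑ a ∈ Finset.univ.filter (fun a => a < b), (w.count a : ℤ))

/-!
Attach to each letter a symmetric integer matrix `S` of positive determinant, so that reversing a
word transposes its matrix. For `2 × 2` matrices, with `skew M = M 0 1 - M 1 0`,
`tr (Uᵀ V) = tr (U V) + skew U * skew V`. The letter matrices map the positive quadrant into cones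
ordered like the letters, which makes `skew` of the matrix of `u` positive exactly when `u ≺ u*`.
Hence, if `u v` is not synchronizing, then reversing `u` strictly decreases the trace, which depends
only on the cyclic word; so a rearrangement of minimal trace is singular.
-/

theorem eq_reverse_or_exists_mismatch {A : Type*} (u : List A) :
    u = u.reverse ∨ ∃ (p m : List A) (x y : A), x ≠ y ∧ u = p ++ (x :: m ++ [y]) ++ p.reverse := by
  induction u using List.bidirectionalRec with
  | nil => exact Or.inl rfl
  | singleton a => exact Or.inl rfl
  | cons_append a l b ih =>
    by_cases hab : a = b
    · subst hab
      rcases ih with hpal | ⟨p, m, x, y, hxy, rfl⟩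
      · exact Or.inl (by simpa using hpal)
      · exact Or.inr ⟨a :: p, m, x, y, hxy, by simp⟩
    · exact Or.inr ⟨[], l, a, b, hab, by simp⟩

section WordOrder

variable {A : Type*} [LinearOrder A]

theorem wlt_cons_cons_self (a : A) (u v : List A) : wlt (a :: u) (a :: v) ↔ wlt u v := by
  constructor
  · rintro (⟨hne, hpre⟩ | ⟨_ | ⟨c, p⟩, s, t, x, y, hxy, hu, hv⟩)
    · exact Or.inl ⟨by simpa using hne, by simpa using hpre⟩
    · simp only [List.nil_append, List.cons.injEq] at hu hv
      exact absurd (hu.1.symm.trans hv.1) hxy.ne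
    · simp only [List.cons_append, List.cons.injEq] at hu hv
      exact Or.inr ⟨p, s, t, x, y, hxy, hu.2, hv.2⟩
  · rintro (⟨hne, hpre⟩ | ⟨p, s, t, x, y, hxy, rfl, rfl⟩)
    · exact Or.inl ⟨by simpa using hne, by simpa using hpre⟩
    · exact Or.inr ⟨a :: p, s, t, x, y, hxy, rfl, rfl⟩

theorem wlt_cons_cons_of_ne {x y : A} (hne : x ≠ y) (s t : List A) :
    wlt (x :: s) (y :: t) ↔ x < y := by
  constructor
  · rintro (⟨-, hpre⟩ | ⟨_ | ⟨c, p⟩, s', t', x', y', hxy, hx, hy⟩)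
    · exact absurd (List.cons_prefix_cons.1 hpre).1 hne.symm
    · simp only [List.nil_append, List.cons.injEq] at hx hy
      rwa [hx.1, hy.1]
    · simp only [List.cons_append, List.cons.injEq] at hx hy
      exact absurd (hx.1.trans hy.1.symm) hne
  · exact fun hxy => Or.inr ⟨[], s, t, x, y, hxy, rfl, rfl⟩

theorem wlt_append_left (p u v : List A) : wlt (p ++ u) (p ++ v) ↔ wlt u v := by
  induction p with
  | nil => rfl
  | cons a p ih => exact (wlt_cons_cons_self a _ _).trans ih

theorem wlt_reverse_iff_of_mismatch {x y : A} (hne : x ≠ y) (p m : List A) :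
    wlt (p ++ (x :: m ++ [y]) ++ p.reverse) (p ++ (x :: m ++ [y]) ++ p.reverse).reverse ↔
      x < y := by
  simp only [List.reverse_append, List.reverse_cons, List.reverse_reverse, List.append_assoc,
    List.cons_append, List.nil_append, wlt_append_left, wlt_cons_cons_of_ne hne]

end WordOrder

section Skew

variable {R : Type*} [CommRing R]

/-- The skew part of a `2 × 2` matrix: `M - Mᵀ` is `skew M` times `!![0, 1; -1, 0]`. For the
matrix of a word its sign records how the word compares with its reversal. -/
def skew (M : Matrix (Fin 2) (Fin 2) R) : R := M 0 1 - M 1 0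

theorem skew_transpose (M : Matrix (Fin 2) (Fin 2) R) : skew M.transpose = -skew M := by
  simp [skew]

theorem skew_mul_mul_transpose (P N : Matrix (Fin 2) (Fin 2) R) :
    skew (P * N * P.transpose) = P.det * skew N := by
  simp only [skew, Matrix.det_fin_two, Matrix.mul_apply, Fin.sum_univ_two, Matrix.transpose_apply]
  ring

theorem trace_transpose_mul (U V : Matrix (Fin 2) (Fin 2) R) :
    (U.transpose * V).trace = (U * V).trace + skew U * skew V := by
  simp only [skew, Matrix.trace_fin_two, Matrix.mul_apply, Fin.sum_univ_two,
    Matrix.transpose_apply]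
  ring

end Skew

section LetterMatrix

/-- The symmetric matrix attached to a letter of weight `r`. Its entries are chosen so that, for
`0 < r`, it maps the positive quadrant onto the cone of slopes between `r` and `r + 1`: distinct
integer weights then give cones with disjoint interiors, ordered like the weights. -/
def letterMatrix (r : ℤ) : Matrix (Fin 2) (Fin 2) ℤ := !![1, r; r, r * (r + 1)]

theorem letterMatrix_transpose (r : ℤ) : (letterMatrix r).transpose = letterMatrix r := by
  ext i j
  fin_cases i <;> fin_cases j <;> rfl

theorem letterMatrix_det (r : ℤ) : (letterMatrix r).det = r := by
  rw [letterMatrix, Matrix.det_fin_two_of]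
  ring

theorem letterMatrix_nonneg {r : ℤ} (hr : 0 ≤ r) (i j : Fin 2) : 0 ≤ letterMatrix r i j := by
  have hcorner : 0 ≤ r * (r + 1) := by positivity
  fin_cases i <;> fin_cases j <;> simp [letterMatrix, hr, hcorner]

theorem skew_letterMatrix_mul_mul (r r' : ℤ) (M : Matrix (Fin 2) (Fin 2) ℤ) :
    skew (letterMatrix r * M * letterMatrix r') =
      (r' - r) * M 0 0 + r' * (r' + 1 - r) * M 0 1 + r * (r' - (r + 1)) * M 1 0 +
        r * r' * (r' - r) * M 1 1 := by
  simp only [skew, letterMatrix, Matrix.mul_apply, Fin.sum_univ_two, Matrix.of_apply,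
    Matrix.cons_val', Matrix.cons_val_zero, Matrix.cons_val_one, Matrix.cons_val_fin_one]
  ring

theorem skew_letterMatrix_mul_mul_pos {r r' : ℤ} (hr : 0 ≤ r) (hlt : r < r')
    {M : Matrix (Fin 2) (Fin 2) ℤ} (hM : ∀ i j, 0 ≤ M i j) (hM₀ : 0 < M 0 0) :
    0 < skew (letterMatrix r * M * letterMatrix r') := by
  have hr' : 0 ≤ r' := hr.trans hlt.le
  have hsub_one : 0 ≤ r' - (r + 1) := by omega
  have hadd_one : 0 ≤ r' + 1 - r := by omega
  have h₀₁ := hM 0 1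
  have h₁₀ := hM 1 0
  have h₁₁ := hM 1 1
  rw [skew_letterMatrix_mul_mul]
  positivity

end LetterMatrix

section WordMatrix

variable {A : Type*} (f : A → ℤ)

/-- The product of the letter matrices along a word whose letters are weighted by `f`. Its trace is
the quantity that a singular rearrangement minimizes. -/
def wordMatrix (w : List A) : Matrix (Fin 2) (Fin 2) ℤ :=
  (w.map fun a => letterMatrix (f a)).prod

theorem wordMatrix_nil : wordMatrix f [] = 1 := rfl

theorem wordMatrix_cons (a : A) (w : List A) :
    wordMatrix f (a :: w) = letterMatrix (f a) * wordMatrix f w :=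
  List.prod_cons

theorem wordMatrix_append (u v : List A) :
    wordMatrix f (u ++ v) = wordMatrix f u * wordMatrix f v := by
  simp [wordMatrix]

theorem wordMatrix_reverse (w : List A) :
    wordMatrix f w.reverse = (wordMatrix f w).transpose := by
  simp only [wordMatrix, Matrix.transpose_list_prod, List.map_reverse, List.map_map,
    Function.comp_def, letterMatrix_transpose]

theorem trace_wordMatrix_of_isRot {w r : List A} (h : isRot w r) :
    (wordMatrix f r).trace = (wordMatrix f w).trace := by
  obtain ⟨s, t, rfl, rfl⟩ := h
  rw [wordMatrix_append, wordMatrix_append, Matrix.trace_mul_comm]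

theorem skew_wordMatrix_of_mismatch (p m : List A) (x y : A) :
    skew (wordMatrix f (p ++ (x :: m ++ [y]) ++ p.reverse)) =
      (wordMatrix f p).det *
        skew (letterMatrix (f x) * wordMatrix f m * letterMatrix (f y)) := by
  simp only [wordMatrix_append, wordMatrix_cons, wordMatrix_nil, wordMatrix_reverse, mul_one,
    skew_mul_mul_transpose]

variable {f}

theorem wordMatrix_det_pos (hf : ∀ a, 0 < f a) (w : List A) : 0 < (wordMatrix f w).det := by
  induction w with
  | nil => simp [wordMatrix_nil]
  | cons a w ih =>
    rw [wordMatrix_cons, Matrix.det_mul, letterMatrix_det]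
    exact mul_pos (hf a) ih

theorem wordMatrix_nonneg (hf : ∀ a, 0 ≤ f a) (w : List A) (i j : Fin 2) :
    0 ≤ wordMatrix f w i j := by
  induction w generalizing i with
  | nil => rw [wordMatrix_nil, Matrix.one_apply]; split <;> simp
  | cons a w ih =>
    rw [wordMatrix_cons, Matrix.mul_apply]
    exact Finset.sum_nonneg fun k _ => mul_nonneg (letterMatrix_nonneg (hf a) i k) (ih k)

theorem wordMatrix_zero_zero_pos (hf : ∀ a, 0 ≤ f a) (w : List A) :
    0 < wordMatrix f w 0 0 := by
  induction w with
  | nil => simp [wordMatrix_nil]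
  | cons a w ih =>
    have hexpand : wordMatrix f (a :: w) 0 0 = wordMatrix f w 0 0 + f a * wordMatrix f w 1 0 := by
      simp [wordMatrix_cons, letterMatrix, Matrix.mul_apply]
    rw [hexpand]
    exact add_pos_of_pos_of_nonneg ih (mul_nonneg (hf a) (wordMatrix_nonneg hf w 1 0))

theorem skew_wordMatrix_pos_of_mismatch (hf : ∀ a, 0 < f a) (p m : List A) {x y : A}
    (hxy : f x < f y) : 0 < skew (wordMatrix f (p ++ (x :: m ++ [y]) ++ p.reverse)) := by
  have hf₀ : ∀ a, 0 ≤ f a := fun a => (hf a).le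
  rw [skew_wordMatrix_of_mismatch]
  exact mul_pos (wordMatrix_det_pos hf p) <|
    skew_letterMatrix_mul_mul_pos (hf₀ x) hxy (wordMatrix_nonneg hf₀ m)
      (wordMatrix_zero_zero_pos hf₀ m)

theorem skew_wordMatrix_neg_of_mismatch (hf : ∀ a, 0 < f a) (p m : List A) {x y : A}
    (hyx : f y < f x) : skew (wordMatrix f (p ++ (x :: m ++ [y]) ++ p.reverse)) < 0 := by
  have hpos := skew_wordMatrix_pos_of_mismatch hf p m.reverse hyx
  rw [← neg_pos, ← skew_transpose, ← wordMatrix_reverse]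
  simpa using hpos

end WordMatrix

section TraceMinimal

variable {A : Type*} [LinearOrder A] {f : A → ℤ}

theorem skew_wordMatrix_ne_zero (hf : ∀ a, 0 < f a) {u : List A}
    (hmono : StrictMonoOn f {a | a ∈ u}) (hu : u ≠ u.reverse) : skew (wordMatrix f u) ≠ 0 := by
  obtain ⟨p, m, x, y, hne, rfl⟩ := (eq_reverse_or_exists_mismatch u).resolve_left hu
  rcases hne.lt_or_gt with hxy | hyx
  · exact (skew_wordMatrix_pos_of_mismatch hf p m (hmono (by simp) (by simp) hxy)).ne'
  · exact (skew_wordMatrix_neg_of_mismatch hf p m (hmono (by simp) (by simp) hyx)).ne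

theorem wlt_reverse_iff_skew_pos (hf : ∀ a, 0 < f a) {u : List A}
    (hmono : StrictMonoOn f {a | a ∈ u}) (hu : u ≠ u.reverse) :
    wlt u u.reverse ↔ 0 < skew (wordMatrix f u) := by
  obtain ⟨p, m, x, y, hne, rfl⟩ := (eq_reverse_or_exists_mismatch u).resolve_left hu
  rw [wlt_reverse_iff_of_mismatch hne]
  rcases hne.lt_or_gt with hxy | hyx
  · have hpos := skew_wordMatrix_pos_of_mismatch hf p m (hmono (by simp) (by simp) hxy)
    exact iff_of_true hxy hpos
  · have hneg := skew_wordMatrix_neg_of_mismatch hf p m (hmono (by simp) (by simp) hyx)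
    exact iff_of_false hyx.not_gt hneg.not_gt

theorem cyclicSingular_of_trace_le_of_perm (hf : ∀ a, 0 < f a) {w : List A}
    (hmono : StrictMonoOn f {a | a ∈ w})
    (hmin : ∀ v : List A, v.Perm w → (wordMatrix f w).trace ≤ (wordMatrix f v).trace) :
    cyclicSingular w := by
  intro u v _ _ hrot hu hv
  have hperm : (u ++ v).Perm w := by
    obtain ⟨s, t, rfl, huv⟩ := hrot
    exact huv ▸ List.perm_append_comm
  have hmono_u : StrictMonoOn f {a | a ∈ u} :=
    hmono.mono fun a ha => hperm.subset (List.mem_append_left v ha)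
  have hmono_v : StrictMonoOn f {a | a ∈ v} :=
    hmono.mono fun a ha => hperm.subset (List.mem_append_right u ha)
  have hmul_nonneg : 0 ≤ skew (wordMatrix f u) * skew (wordMatrix f v) := by
    have hle := hmin (u.reverse ++ v) ((u.reverse_perm.append_right v).trans hperm)
    rwa [← trace_wordMatrix_of_isRot f hrot, wordMatrix_append, wordMatrix_append,
      wordMatrix_reverse, trace_transpose_mul, le_add_iff_nonneg_right] at hle
  have hmul_ne_zero : skew (wordMatrix f u) * skew (wordMatrix f v) ≠ 0 :=
    mul_ne_zero (skew_wordMatrix_ne_zero hf hmono_u hu) (skew_wordMatrix_ne_zero hf hmono_v hv)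
  rw [wlt_reverse_iff_skew_pos hf hmono_u hu, wlt_reverse_iff_skew_pos hf hmono_v hv]
  exact pos_iff_pos_of_mul_pos (hmul_nonneg.lt_of_ne' hmul_ne_zero)

end TraceMinimal

theorem exists_pos_strictMonoOn {α : Type*} [Preorder α] (s : Finset α) :
    ∃ f : α → ℤ, (∀ a, 0 < f a) ∧ StrictMonoOn f s := by
  classical
  refine ⟨fun a => (s.filter (· < a)).card + 1, fun a => by positivity, fun a ha b _ hab => ?_⟩
  have hssubset : s.filter (· < a) ⊂ s.filter (· < b) :=
    Finset.ssubset_iff_of_subset (Finset.monotone_filter_right s fun _ _ hc => hc.trans hab) |>.2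
      ⟨a, by simpa using ⟨ha, hab⟩, by simp⟩
  simpa using Finset.card_lt_card hssubset

theorem stmt12_general {A : Type*} [LinearOrder A] (w : List A) :
    ∃ w' : List A, w'.Perm w ∧ cyclicSingular w' := by
  obtain ⟨f, hf, hmono⟩ := exists_pos_strictMonoOn w.toFinset
  obtain ⟨w', hw', hmin⟩ := Finset.exists_min_image w.permutations.toFinset
    (fun v => (wordMatrix f v).trace) ⟨w, by simp⟩
  simp only [List.mem_toFinset, List.mem_permutations] at hw' hmin
  have hmono' : StrictMonoOn f {a | a ∈ w'} :=
    hmono.mono fun a ha => by simpa using hw'.subset ha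
  exact ⟨w', hw', cyclicSingular_of_trace_le_of_perm hf hmono' fun v hv => hmin v (hv.trans hw')⟩

theorem stmt12 {A : Type*} [LinearOrder A] [Fintype A] (w : List A) (hw : w ≠ []) :
    ∃ w' : List A, w'.Perm w ∧ cyclicSingular w' :=
  stmt12_general w
end

section
/- Let ω be a cyclic singular word over a finite ordered alphabet A and b ∈ A with 0 < |δ_b(ω)| ≤ |ω|_b. Then ω contains exactly |δ_b(ω)| maximal runs of consecutive b's, i.e., |ω|_b − |ω|_{bb} = |δ_b(ω)| where |ω|_{bb} counts cyclic occurrences of the factor bb. -/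
/-!
Let `F i` and `C j` be the infinite words read forwards from `i` and backwards from `j` in the
cyclic word `W`, and draw an arrow `i → j` when `F i < C j`. Applied to the factorization into
`W i … W j` and `W (j + 1) … W (i - 1)`, singularity says `i → j ↔ j + 1 → i - 1`; hence as many
arrows enter `j` as leave `j + 1`. Comparing first letters, the number of arrows entering a
position `j` with letter `b` is the number of letters smaller than `b` plus the number of
occurrences of `b` with an arrow to `j`, and dually for the arrows leaving it.

Let `N` be the number of occurrences of `b`, let `d = |δ_b|` and suppose `δ_b < 0`. Inside the set
of occurrences of `b`, the first position of a run then has outdegree at most `d` and the others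
at least `d`, while the last position of a run has indegree at least `N - d` and the others at most
`N - d`. As the arrows come from comparing elements of a linear order, their sets of targets are
nested, and this forces the number of runs to be `d`. The case `δ_b > 0` follows by reversing both
the word and the order of the alphabet.
-/

namespace CyclicWord

open Finset

section NestedRelation

/-- The rows of the relation `R`, viewed as a 0-1 matrix, form a chain for inclusion (a *Ferrers
relation*), as they do whenever `R a c` means `f a < g c` in a linear order. -/
def HasNestedRows {α β : Type*} (R : α → β → Prop) : Prop :=
  ∀ a a', (∀ c, R a c → R a' c) ∨ ∀ c, R a' c → R a c

theorem HasNestedRows.compl {α β : Type*} {R : α → β → Prop} (hR : HasNestedRows R) :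
    HasNestedRows fun a c => ¬ R a c :=
  fun a a' => (hR a a').symm.imp (fun h c => mt (h c)) fun h c => mt (h c)

theorem HasNestedRows.exists_mem_forall_imp {α β : Type*} {R : α → β → Prop} {S : Finset α}
    (hR : HasNestedRows R) (hS : S.Nonempty) : ∃ a ∈ S, ∀ a' ∈ S, ∀ c, R a' c → R a c := by
  induction hS using Finset.Nonempty.cons_induction with
  | singleton a => simp
  | cons a s _ _ ih =>
    obtain ⟨m, hm, hmax⟩ := ih
    simp only [mem_cons, exists_eq_or_imp, forall_eq_or_imp]
    rcases hR a m with h | h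
    · exact .inr ⟨m, hm, h, hmax⟩
    · exact .inl ⟨fun _ => id, fun a' ha' c hc => h c (hmax a' ha' c hc)⟩

variable {α : Type*} {R : α → α → Prop} {B S E : Finset α} {d : ℕ}

theorem card_le_of_nested_of_degree_bounds [DecidableRel R]
    (hR : HasNestedRows R) (hSB : S ⊆ B) (hEB : E ⊆ B) (hcard : #S ≤ #E)
    (hrow : ∀ a ∈ S, #{c ∈ B | R a c} ≤ d) (hcol : ∀ c ∈ E, #B ≤ #{a ∈ B | R a c} + d) :
    #S ≤ d := by
  classical
  by_contra! hlt
  obtain ⟨m, hmS, hm⟩ := hR.exists_mem_forall_imp (card_pos.1 (Nat.zero_lt_of_lt hlt))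
  have hmE : ∀ c ∈ E, R m c := by
    intro c hc
    obtain ⟨a, haS, hac⟩ : ∃ a ∈ S, R a c := by
      by_contra! hnone
      have hsub : ({a ∈ B | R a c} : Finset α) ⊆ B \ S := fun a ha => by
        rw [mem_filter] at ha
        exact mem_sdiff.2 ⟨ha.1, fun haS => hnone a haS ha.2⟩
      have := card_le_card hsub
      have := hcol c hc
      have := card_sdiff_add_card_eq_card hSB
      omega
    exact hm a haS c hac
  have hE : #E ≤ #{c ∈ B | R m c} :=
    card_le_card fun c hc => mem_filter.2 ⟨hEB hc, hmE c hc⟩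
  have := hrow m hmS
  omega

theorem card_eq_of_nested_of_degree_bounds [DecidableEq α] [DecidableRel R]
    (hR : HasNestedRows R) (hSB : S ⊆ B) (hEB : E ⊆ B) (hcard : #S = #E) (hd : d ≤ #B)
    (hrow : ∀ a ∈ S, #{c ∈ B | R a c} ≤ d) (hrow' : ∀ a ∈ B \ S, d ≤ #{c ∈ B | R a c})
    (hcol : ∀ c ∈ E, #B ≤ #{a ∈ B | R a c} + d)
    (hcol' : ∀ c ∈ B \ E, #{a ∈ B | R a c} + d ≤ #B) :
    #S = d := by
  refine le_antisymm (card_le_of_nested_of_degree_bounds hR hSB hEB hcard.le hrow hcol) ?_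
  -- Negating `R` and complementing `S` and `E` in `B` replaces `d` by `#B - d`.
  have hSc := card_sdiff_add_card_eq_card hSB
  have hEc := card_sdiff_add_card_eq_card hEB
  have hcompl : #(B \ S) ≤ #B - d := by
    refine card_le_of_nested_of_degree_bounds (R := fun a c => ¬ R a c) (E := B \ E) (B := B)
      hR.compl sdiff_subset sdiff_subset (by omega) (fun a ha => ?_) (fun c hc => ?_)
    · have := hrow' a ha
      have := card_filter_add_card_filter_not (s := B) (R a ·)
      omega
    · have := hcol' c hc
      have := card_filter_add_card_filter_not (s := B) (R · c)
      omega
  omega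

end NestedRelation

section Lex

variable {A : Type*} {f g : ℕ → A} {l : ℕ}

theorem map_range_eq_append_cons {p s : List A} {x : A}
    (h : (List.range l).map f = p ++ x :: s) :
    p.length < l ∧ f p.length = x ∧ p = (List.range p.length).map f := by
  have hl : p.length < l := by
    have := congrArg List.length h
    simp only [List.length_map, List.length_range, List.length_append, List.length_cons] at this
    omega
  refine ⟨hl, ?_, ?_⟩
  · simpa [hl] using congrArg (fun u => u[p.length]?) h
  · simpa [← List.map_take, List.take_range, hl.le] using
      (congrArg (List.take p.length) h).symm

theorem map_range_eq_map_range_append_cons {k : ℕ} (hk : k < l) :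
    ∃ s, (List.range l).map f = (List.range k).map f ++ f k :: s := by
  obtain ⟨m, rfl⟩ := Nat.exists_eq_add_of_lt hk
  exact ⟨(List.range m).map fun j => f (k + (j + 1)), by
    simp [add_assoc, List.range_add, List.range_succ_eq_map, Function.comp_def]⟩

variable [LinearOrder A]

theorem toLex_lt_toLex_iff :
    toLex f < toLex g ↔ ∃ k, (∀ j < k, f j = g j) ∧ f k < g k := Iff.rfl

theorem toLex_lt_toLex_iff_shift (h : ∀ k < l, f k = g k) :
    toLex f < toLex g ↔ toLex (fun k => f (l + k)) < toLex (fun k => g (l + k)) := by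
  rw [toLex_lt_toLex_iff, toLex_lt_toLex_iff]
  constructor
  · rintro ⟨k, heq, hlt⟩
    obtain ⟨m, rfl⟩ : ∃ m, k = l + m :=
      Nat.exists_eq_add_of_le (not_lt.1 fun hk => hlt.ne (h k hk))
    exact ⟨m, fun j hj => heq _ (by omega), hlt⟩
  · rintro ⟨k, heq, hlt⟩
    refine ⟨l + k, fun j hj => ?_, hlt⟩
    rcases lt_or_ge j l with hjl | hjl
    · exact h j hjl
    · obtain ⟨m, rfl⟩ := Nat.exists_eq_add_of_le hjl
      exact heq m (by omega)

theorem wlt_map_range_iff (hne : (List.range l).map f ≠ (List.range l).map g) :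
    wlt ((List.range l).map f) ((List.range l).map g) ↔ toLex f < toLex g := by
  rw [toLex_lt_toLex_iff]
  constructor
  · rintro (⟨hne', hpre⟩ | ⟨p, s, t, x, y, hxy, hu, hv⟩)
    · exact absurd (hpre.eq_of_length (by simp)) hne'
    · obtain ⟨-, rfl, hpf⟩ := map_range_eq_append_cons hu
      obtain ⟨-, rfl, hpg⟩ := map_range_eq_append_cons hv
      exact ⟨p.length, fun j hj => List.map_inj_left.1 (hpf.symm.trans hpg) j
        (List.mem_range.2 hj), hxy⟩
  · rintro ⟨k, heq, hlt⟩
    have hkl : k < l := by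
      by_contra! hlk
      exact hne (List.map_congr_left fun j hj => heq j ((List.mem_range.1 hj).trans_le hlk))
    have hprefix : (List.range k).map f = (List.range k).map g :=
      List.map_congr_left fun j hj => heq j (List.mem_range.1 hj)
    obtain ⟨s, hs⟩ := map_range_eq_map_range_append_cons (f := f) hkl
    obtain ⟨t, ht⟩ := map_range_eq_map_range_append_cons (f := g) hkl
    exact .inr ⟨_, s, t, f k, g k, hlt, hs, hprefix ▸ ht⟩

end Lex

/-- The infinite word `W i, W (i + 1), …` read forwards from `i` is lexicographically smaller than
the infinite word `W j, W (j - 1), …` read backwards from `j`. Unless the factor `u = W i … W j` is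
a palindrome, this compares `u` with its reversal. -/
def Precedes {A : Type*} [LinearOrder A] {n : ℕ} (W : ZMod n → A) (i j : ZMod n) : Prop :=
  toLex (fun k : ℕ => W (i + k)) < toLex (fun k : ℕ => W (j - k))

noncomputable instance {A : Type*} [LinearOrder A] {n : ℕ} (W : ZMod n → A) :
    DecidableRel (Precedes W) :=
  Classical.decRel _

/-- The word of length `l` read forwards from position `i` of the cyclic word `W`. For `l = n` it
is a linear representation of `W`. -/
def factor {A : Type*} {n : ℕ} (W : ZMod n → A) (i : ZMod n) (l : ℕ) : List A :=
  (List.range l).map fun k : ℕ => W (i + k)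

/-- Singularity of a cyclic word in terms of infinite readings: `W` is the product of the factors
`W i … W j` and `W (j + 1) … W (i - 1)`, and these compare with their reversals in the same way. -/
def IsSynchronizing {A : Type*} [LinearOrder A] {n : ℕ} (W : ZMod n → A) : Prop :=
  ∀ i j, Precedes W i j ↔ Precedes W (j + 1) (i - 1)

/-- The positions of the letter `b` in the cyclic word `W`. -/
def occurrences {A : Type*} [DecidableEq A] {n : ℕ} [NeZero n] (W : ZMod n → A) (b : A) :
    Finset (ZMod n) :=
  {i | W i = b}

section Precedes

variable {A : Type*} [LinearOrder A] {n : ℕ} {W : ZMod n → A} {i j : ZMod n}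

theorem precedes_of_lt (h : W i < W j) : Precedes W i j :=
  toLex_lt_toLex_iff.2 ⟨0, by simp, by simpa using h⟩

theorem le_of_precedes (h : Precedes W i j) : W i ≤ W j := by
  obtain ⟨k, heq, hlt⟩ := toLex_lt_toLex_iff.1 h
  rcases k.eq_zero_or_pos with rfl | hk
  · simpa using hlt.le
  · simpa using (heq 0 hk).le

theorem precedes_shift {l : ℕ} (h : ∀ k < l, W (i + k) = W (j - k)) :
    Precedes W i j ↔ Precedes W (i + l) (j - l) := by
  simpa [Precedes, add_assoc, sub_sub] using
    toLex_lt_toLex_iff_shift (f := fun k : ℕ => W (i + k)) (g := fun k : ℕ => W (j - k)) h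

theorem hasNestedRows_precedes (W : ZMod n → A) : HasNestedRows (Precedes W) := fun i i' =>
  (le_total (toLex fun k : ℕ => W (i' + k)) (toLex fun k : ℕ => W (i + k))).imp
    (fun h _ => h.trans_lt) fun h _ => h.trans_lt

end Precedes

section Factor

variable {A : Type*} {n : ℕ} (W : ZMod n → A)

@[simp]
theorem length_factor (i : ZMod n) (l : ℕ) : (factor W i l).length = l := by
  simp [factor]

theorem factor_append (i : ZMod n) (l m : ℕ) :
    factor W i l ++ factor W (i + l) m = factor W i (l + m) := by
  simp [factor, List.range_add, Function.comp_def, add_assoc]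

theorem reverse_factor {i j : ZMod n} {l : ℕ} (hl : i + l = j + 1) :
    (factor W i l).reverse = (List.range l).map fun k : ℕ => W (j - k) := by
  refine List.ext_getElem (by simp) fun k hk _ => ?_
  rw [List.length_reverse, length_factor] at hk
  obtain ⟨m, rfl⟩ := Nat.exists_eq_add_of_lt hk
  have hpos : i + m = j - k := by
    push_cast at hl
    linear_combination hl
  simp [factor, hpos]

theorem rotate_factor (i : ZMod n) (k : ℕ) :
    (factor W i n).rotate k = factor W (i + k) n := by
  refine List.ext_getElem (by simp) fun m _ _ => ?_
  simp [factor, List.getElem_rotate, add_assoc, add_comm (k : ZMod n)]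

theorem isRot_factor [NeZero n] (i : ZMod n) : isRot (factor W 0 n) (factor W i n) := by
  refine ⟨_, _, (List.take_append_drop (i.val % (factor W 0 n).length) _).symm, ?_⟩
  rw [← List.rotate_eq_drop_append_take_mod, rotate_factor, ZMod.natCast_zmod_val, zero_add]

theorem exists_eq_factor {w : List A} (hw : w ≠ []) :
    ∃ (n : ℕ) (_ : NeZero n) (W : ZMod n → A), w = factor W 0 n := by
  have : NeZero w.length := ⟨by simpa using hw⟩
  refine ⟨w.length, this, fun i => w[i.val]'(ZMod.val_lt i), ?_⟩
  refine List.ext_getElem (by simp) fun k hk _ => ?_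
  simp [factor, ZMod.val_natCast, Nat.mod_eq_of_lt hk]

theorem countP_factor [NeZero n] (p : A → Prop) [DecidablePred p] :
    (factor W 0 n).countP (fun a => decide (p a)) = #{i | p (W i)} := by
  rw [factor, List.countP_map, List.countP_eq_length_filter,
    ← List.toFinset_card_of_nodup (List.nodup_range.filter _)]
  symm
  refine card_bij' (fun i _ => i.val) (fun k _ => (k : ZMod n)) ?_ ?_ ?_ ?_
  · simp [ZMod.val_lt]
  · simp
  · simp
  · simp +contextual [ZMod.val_natCast, Nat.mod_eq_of_lt]

theorem count_factor [NeZero n] [BEq A] [LawfulBEq A] [DecidableEq A] (b : A) :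
    (factor W 0 n).count b = #(occurrences W b) := by
  rw [occurrences, ← countP_factor W (· = b), List.count]
  exact List.countP_congr (by simp)

theorem zip_factor_rotate_one :
    (factor W 0 n).zip ((factor W 0 n).rotate 1) = factor (fun i => (W i, W (i + 1))) 0 n := by
  rw [rotate_factor, factor, factor, List.zip_map']
  simp [factor, add_comm]

end Factor

section Singular

variable {A : Type*} [LinearOrder A] {n : ℕ} {W : ZMod n → A} {i j : ZMod n} {l : ℕ}

theorem precedes_iff_of_palindrome (hl : i + l = j + 1)
    (hpal : factor W i l = (factor W i l).reverse) :
    Precedes W i j ↔ Precedes W (j + 1) (i - 1) := by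
  rw [reverse_factor W hl] at hpal
  rw [precedes_shift fun k hk => List.map_inj_left.1 hpal k (List.mem_range.2 hk), hl,
    show j - l = i - 1 by linear_combination -hl]

theorem wlt_reverse_factor_iff (hl : i + l = j + 1)
    (hpal : factor W i l ≠ (factor W i l).reverse) :
    wlt (factor W i l) (factor W i l).reverse ↔ Precedes W i j := by
  rw [reverse_factor W hl] at hpal ⊢
  exact wlt_map_range_iff hpal

theorem isSynchronizing_of_cyclicSingular [NeZero n] (hs : cyclicSingular (factor W 0 n)) :
    IsSynchronizing W := by
  intro i j
  set l := (j + 1 - i).val with hl_def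
  have hl : i + l = j + 1 := by rw [hl_def, ZMod.natCast_zmod_val]; ring
  have hln : l < n := ZMod.val_lt _
  have hm : j + 1 + (n - l : ℕ) = i - 1 + 1 := by
    rw [Nat.cast_sub hln.le, ZMod.natCast_self]
    linear_combination -hl
  by_cases hu : factor W i l = (factor W i l).reverse
  · exact precedes_iff_of_palindrome hl hu
  by_cases hv : factor W (j + 1) (n - l) = (factor W (j + 1) (n - l)).reverse
  · simpa using (precedes_iff_of_palindrome hm hv).symm
  have hrot : isRot (factor W 0 n) (factor W i l ++ factor W (j + 1) (n - l)) := by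
    rw [← hl, factor_append, Nat.add_sub_cancel' hln.le]
    exact isRot_factor W i
  rw [← wlt_reverse_factor_iff hl hu, ← wlt_reverse_factor_iff hm hv]
  exact hs _ _ (fun h => hu (by simp [h])) (fun h => hv (by simp [h])) hrot hu hv

end Singular

section Occurrences

variable {n : ℕ} [NeZero n]

theorem card_filter_succ (p : ZMod n → Prop) [DecidablePred p] :
    #{i | p (i + 1)} = #{i | p i} :=
  card_bij' (fun i _ => i + 1) (fun i _ => i - 1) (by simp) (by simp) (by simp) (by simp)

theorem card_filter_neg (p : ZMod n → Prop) [DecidablePred p] : #{i | p (-i)} = #{i | p i} :=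
  card_bij' (fun i _ => -i) (fun i _ => -i) (by simp) (by simp) (by simp) (by simp)

variable {A : Type*} [DecidableEq A] {W : ZMod n → A} {b : A}

theorem mem_occurrences {i : ZMod n} : i ∈ occurrences W b ↔ W i = b := by
  simp [occurrences]

theorem card_run_starts_eq_card_run_ends :
    #{j ∈ occurrences W b | W (j - 1) ≠ b} = #{j ∈ occurrences W b | W (j + 1) ≠ b} := by
  have hends := card_filter_add_card_filter_not (s := occurrences W b) (fun j => W (j + 1) = b)
  have hstarts := card_filter_add_card_filter_not (s := occurrences W b) (fun j => W (j - 1) = b)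
  have hpairs : #{j ∈ occurrences W b | W (j + 1) = b} =
      #{j ∈ occurrences W b | W (j - 1) = b} := by
    simp only [occurrences, filter_filter]
    rw [← card_filter_succ fun j => W j = b ∧ W (j - 1) = b]
    simp only [add_sub_cancel_right, and_comm]
  simp only [ne_eq]
  omega

end Occurrences

section Counting

variable {A : Type*} [LinearOrder A] {n : ℕ} [NeZero n] {W : ZMod n → A} {b : A} {j : ZMod n}

theorem card_precedes_to_le (hj : W j < b) :
    #{i | Precedes W i j} ≤ #{i | W i < b} :=
  card_le_card <| monotone_filter_right _ fun _ _ h => (le_of_precedes h).trans_lt hj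

theorem card_precedes_from_le (hj : b < W j) :
    #{i | Precedes W j i} ≤ #{i | b < W i} :=
  card_le_card <| monotone_filter_right _ fun _ _ h => hj.trans_le (le_of_precedes h)

theorem card_add_card_occurrences_le_card_precedes_to (hj : b < W j) :
    #{i | W i < b} + #(occurrences W b) ≤ #{i | Precedes W i j} := by
  rw [occurrences, ← card_union_of_disjoint (disjoint_filter.2 fun _ _ h => h.ne)]
  refine card_le_card fun i hi => ?_
  simp only [mem_union, mem_filter_univ] at hi ⊢
  exact precedes_of_lt ((hi.elim le_of_lt le_of_eq).trans_lt hj)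

theorem card_add_card_occurrences_le_card_precedes_from (hj : W j < b) :
    #{i | b < W i} + #(occurrences W b) ≤ #{i | Precedes W j i} := by
  rw [occurrences, ← card_union_of_disjoint (disjoint_filter.2 fun _ _ h => h.ne')]
  refine card_le_card fun i hi => ?_
  simp only [mem_union, mem_filter_univ] at hi ⊢
  exact precedes_of_lt (hj.trans_le (hi.elim le_of_lt ge_of_eq))

theorem card_precedes_to (hj : W j = b) :
    #{i | Precedes W i j} =
      #{i | W i < b} + #{i ∈ occurrences W b | Precedes W i j} := by
  rw [occurrences, filter_filter,
    ← card_union_of_disjoint (disjoint_filter.2 fun _ _ h h' => h.ne h'.1)]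
  congr 1
  ext i
  simp only [mem_union, mem_filter_univ, ← hj]
  exact ⟨fun h => (le_of_precedes h).lt_or_eq.imp_right fun h' => ⟨h', h⟩,
    fun h => h.elim precedes_of_lt And.right⟩

theorem card_precedes_from (hj : W j = b) :
    #{i | Precedes W j i} =
      #{i | b < W i} + #{i ∈ occurrences W b | Precedes W j i} := by
  rw [occurrences, filter_filter,
    ← card_union_of_disjoint (disjoint_filter.2 fun _ _ h h' => h.ne' h'.1)]
  congr 1
  ext i
  simp only [mem_union, mem_filter_univ, ← hj]
  exact ⟨fun h => (le_of_precedes h).lt_or_eq.imp_right fun h' => ⟨h'.symm, h⟩,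
    fun h => h.elim precedes_of_lt And.right⟩

end Counting

namespace IsSynchronizing

variable {A : Type*} [LinearOrder A] {n : ℕ} {W : ZMod n → A} {b : A} {j : ZMod n}

theorem reverse_dual (hW : IsSynchronizing W) :
    IsSynchronizing fun i => OrderDual.toDual (W (-i)) := by
  have hprecedes : ∀ i j,
      Precedes (fun i => OrderDual.toDual (W (-i))) i j ↔ Precedes W (-j) (-i) := by
    intro i j
    simp only [Precedes, toLex_lt_toLex_iff, OrderDual.toDual_lt_toDual,
      EmbeddingLike.apply_eq_iff_eq, neg_add', neg_sub', sub_neg_eq_add,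
      eq_comm (a := W (-j + _))]
  intro i j
  rw [hprecedes, hprecedes, hW, neg_add', neg_sub', sub_neg_eq_add]

variable [NeZero n]

theorem card_precedes_to_eq_card_precedes_from (hW : IsSynchronizing W) (j : ZMod n) :
    #{i | Precedes W i j} = #{i | Precedes W (j + 1) i} := by
  rw [← card_filter_succ fun i => Precedes W i j]
  simp [hW _ j]

theorem le_card_filter_precedes_to_of_run_end (hW : IsSynchronizing W)
    (hj : W j = b) (hend : W (j + 1) ≠ b) (hlt : #{i | b < W i} < #{i | W i < b}) :
    #(occurrences W b) + #{i | b < W i} ≤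
      #{i ∈ occurrences W b | Precedes W i j} + #{i | W i < b} := by
  have hrank := (card_precedes_to hj).symm.trans (hW.card_precedes_to_eq_card_precedes_from j)
  rcases hend.lt_or_gt with h | h
  · have := card_add_card_occurrences_le_card_precedes_from h
    omega
  · have := card_precedes_from_le h
    omega

theorem card_filter_precedes_to_le_of_not_run_end (hW : IsSynchronizing W)
    (hj : W j = b) (hnext : W (j + 1) = b) :
    #{i ∈ occurrences W b | Precedes W i j} + #{i | W i < b} ≤
      #(occurrences W b) + #{i | b < W i} := by
  have hrank := (card_precedes_to hj).symm.trans (hW.card_precedes_to_eq_card_precedes_from j)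
  rw [card_precedes_from hnext] at hrank
  have := card_filter_le (occurrences W b) fun i => Precedes W (j + 1) i
  omega

theorem card_filter_precedes_from_le_of_run_start (hW : IsSynchronizing W)
    (hj : W j = b) (hstart : W (j - 1) ≠ b) (hlt : #{i | b < W i} < #{i | W i < b}) :
    #{i ∈ occurrences W b | Precedes W j i} + #{i | b < W i} ≤ #{i | W i < b} := by
  have hrank := hW.card_precedes_to_eq_card_precedes_from (j - 1)
  rw [sub_add_cancel, card_precedes_from hj] at hrank
  rcases hstart.lt_or_gt with h | h
  · have := card_precedes_to_le h
    omega
  · have := card_add_card_occurrences_le_card_precedes_to h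
    have := card_filter_le (occurrences W b) fun i => Precedes W j i
    omega

theorem le_card_filter_precedes_from_of_not_run_start (hW : IsSynchronizing W)
    (hj : W j = b) (hprev : W (j - 1) = b) :
    #{i | W i < b} ≤ #{i ∈ occurrences W b | Precedes W j i} + #{i | b < W i} := by
  have hrank := hW.card_precedes_to_eq_card_precedes_from (j - 1)
  rw [sub_add_cancel, card_precedes_from hj, card_precedes_to hprev] at hrank
  omega

theorem card_run_ends_of_card_gt_lt_card_lt (hW : IsSynchronizing W)
    (hlt : #{i | b < W i} < #{i | W i < b})
    (hle : #{i | W i < b} ≤ #(occurrences W b) + #{i | b < W i}) :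
    #{j ∈ occurrences W b | W (j + 1) ≠ b} + #{i | b < W i} = #{i | W i < b} := by
  have hcard := card_run_starts_eq_card_run_ends (W := W) (b := b)
  have hstarts : #{j ∈ occurrences W b | W (j - 1) ≠ b} = #{i | W i < b} - #{i | b < W i} := by
    refine card_eq_of_nested_of_degree_bounds (R := Precedes W)
      (hasNestedRows_precedes W) (filter_subset _ _) (filter_subset _ _) hcard
      (by omega) ?_ ?_ ?_ ?_ <;> intro j hj
    all_goals simp only [mem_sdiff, mem_filter, mem_occurrences, not_and_not_right] at hj
    · have := hW.card_filter_precedes_from_le_of_run_start hj.1 hj.2 hlt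
      omega
    · have := hW.le_card_filter_precedes_from_of_not_run_start hj.1 (hj.2 hj.1)
      omega
    · have := hW.le_card_filter_precedes_to_of_run_end hj.1 hj.2 hlt
      omega
    · have := hW.card_filter_precedes_to_le_of_not_run_end hj.1 (hj.2 hj.1)
      omega
  omega

theorem card_run_ends_of_card_lt_lt_card_gt (hW : IsSynchronizing W)
    (hlt : #{i | W i < b} < #{i | b < W i})
    (hle : #{i | b < W i} ≤ #(occurrences W b) + #{i | W i < b}) :
    #{j ∈ occurrences W b | W (j + 1) ≠ b} + #{i | W i < b} = #{i | b < W i} := by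
  let V : ZMod n → Aᵒᵈ := fun i => OrderDual.toDual (W (-i))
  have hV : IsSynchronizing V := hW.reverse_dual
  have hbelow : #{i | OrderDual.toDual b < V i} = #{i | W i < b} :=
    card_filter_neg (W · < b)
  have habove : #{i | V i < OrderDual.toDual b} = #{i | b < W i} :=
    card_filter_neg (b < W ·)
  have hocc : #(occurrences V (OrderDual.toDual b)) = #(occurrences W b) :=
    card_filter_neg (W · = b)
  have hends : #{j ∈ occurrences V (OrderDual.toDual b) | V (j + 1) ≠ OrderDual.toDual b} =
      #{j ∈ occurrences W b | W (j + 1) ≠ b} := by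
    rw [← card_run_starts_eq_card_run_ends (W := W)]
    simp only [occurrences, filter_filter]
    rw [← card_filter_neg fun j => W j = b ∧ W (j - 1) ≠ b]
    simp [V, sub_eq_neg_add]
  rw [← hends, ← hbelow, ← habove]
  exact hV.card_run_ends_of_card_gt_lt_card_lt (by omega) (by omega)

theorem card_run_ends_eq_natAbs (hW : IsSynchronizing W) (hne : #{i | b < W i} ≠ #{i | W i < b})
    (hle : ((#{i | b < W i} : ℤ) - #{i | W i < b}).natAbs ≤ #(occurrences W b)) :
    #{j ∈ occurrences W b | W (j + 1) ≠ b} =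
      ((#{i | b < W i} : ℤ) - #{i | W i < b}).natAbs := by
  rcases hne.lt_or_gt with hlt | hlt
  · have := hW.card_run_ends_of_card_gt_lt_card_lt hlt (by omega)
    omega
  · have := hW.card_run_ends_of_card_lt_lt_card_gt hlt (by omega)
    omega

end IsSynchronizing

theorem count_sub_count_zip_rotate_eq_card_run_ends {A : Type*} [DecidableEq A] {n : ℕ} [NeZero n]
    (W : ZMod n → A) (b : A) :
    (factor W 0 n).count b - ((factor W 0 n).zip ((factor W 0 n).rotate 1)).count (b, b) =
      #{j ∈ occurrences W b | W (j + 1) ≠ b} := by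
  have hpairs : ((factor W 0 n).zip ((factor W 0 n).rotate 1)).count (b, b) =
      #{j ∈ occurrences W b | W (j + 1) = b} := by
    rw [zip_factor_rotate_one, count_factor]
    simp [occurrences, filter_filter]
  have hsplit := card_filter_add_card_filter_not (s := occurrences W b) (fun j => W (j + 1) = b)
  rw [hpairs, count_factor]
  simp only [ne_eq]
  omega

theorem deltaW_eq_countP_sub_countP {A : Type*} [LinearOrder A] [Fintype A] (w : List A) (b : A) :
    deltaW w b = (w.countP (b < ·) : ℤ) - w.countP (· < b) := by
  have hsum (p : A → Prop) [DecidablePred p] :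
      ∑ a ∈ univ.filter p, (w.count a : ℤ) = w.countP p := by
    rw [← sum_filter_count_eq_countP, Nat.cast_sum]
    refine (sum_subset (filter_subset_filter p (subset_univ _)) fun a ha hna => ?_).symm
    have : a ∉ w := by simp_all
    exact_mod_cast List.count_eq_zero.2 this
  rw [deltaW, hsum, hsum]

end CyclicWord

open CyclicWord in
theorem stmt15_general {A : Type*} [LinearOrder A] (w : List A) (b : A)
    (hs : cyclicSingular w) (h0 : (w.countP (b < ·) : ℤ) - w.countP (· < b) ≠ 0)
    (hle : ((w.countP (b < ·) : ℤ) - w.countP (· < b)).natAbs ≤ w.count b) :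
    w.count b - (w.zip (w.rotate 1)).count (b, b) =
      ((w.countP (b < ·) : ℤ) - w.countP (· < b)).natAbs := by
  have hw : w ≠ [] := by
    rintro rfl
    simp at h0
  obtain ⟨n, _, W, rfl⟩ := exists_eq_factor hw
  rw [count_sub_count_zip_rotate_eq_card_run_ends]
  rw [countP_factor, countP_factor] at h0 hle ⊢
  rw [count_factor] at hle
  exact (isSynchronizing_of_cyclicSingular hs).card_run_ends_eq_natAbs (by omega) hle

theorem stmt15 {A : Type*} [LinearOrder A] [Fintype A] (w : List A) (b : A)
    (hs : cyclicSingular w) (h0 : deltaW w b ≠ 0)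
    (hle : (deltaW w b).natAbs ≤ w.count b) :
    w.count b - (w.zip (w.rotate 1)).count (b, b) = (deltaW w b).natAbs := by
  rw [CyclicWord.deltaW_eq_countP_sub_countP] at h0 hle ⊢
  exact stmt15_general w b hs h0 hle
end

section
/- Let b ∈ A and ω a cyclic word over the finite ordered alphabet A with δ_b(ω) ≠ 0. Then ω is singular if and only if ξ_b(ω) is singular. -/
/-- The cyclic version of `ξ_b`: inserts one extra `b` into each maximal cyclic run of
`b`'s (i.e. before each cyclic run start) and a `b` between any two cyclically adjacent
letters that are both strictly larger than `b` or both strictly smaller than `b`. -/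
def cxi {A : Type*} [LinearOrder A] (b : A) (w : List A) : List A :=
  (w.zip (w.rotate 1)).flatMap fun p =>
    if (p.1 ≠ b ∧ p.2 = b) ∨ (p.1 < b ∧ p.2 < b) ∨ (b < p.1 ∧ b < p.2) then [p.1, b]
    else [p.1]

/-!
A factorization `uv` of `ω` that is not synchronizing yields, around the two borders between `u` and
`v`, factors `a m x` and `(c m y)*` of the periodic word `ω^∞` with `a < c` and `x < y`. Conversely,
two such factors cannot overlap modulo the period, so cutting `ω` after `a` and before `c` gives a
factorization that is not synchronizing. Hence `ω` is singular iff there is no such pair of factors.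

Reading a word outwards from one of its letters, in either direction, `ξ_b` preserves the comparison
at the first mismatch. Comparing outwards from a common letter of `m` therefore carries such pairs
from `ω` to `ξ_b(ω)`, and back when the letter is not `b`. The cases where `m` has no usable letter
reduce to the values of `ξ_b` on two-letter words and on runs of `b`.
-/

section Words

variable {A : Type*}

theorem exists_eq_append_cons_of_notMem {c : A} {p q u v : List A} (hc : c ∉ p)
    (h : p ++ q = u ++ c :: v) : ∃ u', q = u' ++ c :: v := by
  induction p generalizing u with
  | nil => exact ⟨u, h⟩
  | cons d p ih =>
    rw [List.mem_cons, not_or] at hc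
    cases u with
    | nil => exact absurd (List.cons.inj h).1.symm hc.1
    | cons e u => exact ih hc.2 (List.cons.inj h).2

theorem pair_infix_append_cons {a x c : A} {p q : List A} (h : [a, x] <:+: p ++ c :: q) :
    [a, x] <:+: p ++ [c] ∨ [a, x] <:+: c :: q := by
  induction p with
  | nil => exact Or.inr h
  | cons d p ih =>
    rw [List.cons_append, List.infix_cons_iff] at h ⊢
    rcases h with h | h
    · cases p <;> simp_all
    · exact (ih h).imp_left Or.inr

section LinearOrder

variable [LinearOrder A]

/-! ### Comparison at the first mismatch -/

/-- The words `f` and `g` have a first mismatch, at which the letter of `f` is the smaller one; in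
particular neither is a prefix of the other. This is the second clause of `wlt`. -/
def MismatchLT (f g : List A) : Prop :=
  ∃ (p s t : List A) (x y : A), x < y ∧ f = p ++ x :: s ∧ g = p ++ y :: t

theorem MismatchLT.append {f g : List A} (h : MismatchLT f g) (p s t : List A) :
    MismatchLT (p ++ f ++ s) (p ++ g ++ t) := by
  obtain ⟨q, u, v, x, y, hxy, rfl, rfl⟩ := h
  exact ⟨p ++ q, u ++ s, v ++ t, x, y, hxy, by simp, by simp⟩

theorem MismatchLT.cons {f g : List A} (h : MismatchLT f g) (a : A) :
    MismatchLT (a :: f) (a :: g) := by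
  simpa using h.append [a] [] []

theorem MismatchLT.lt {f g : List A} (h : MismatchLT f g) : f < g := by
  obtain ⟨p, s, t, x, y, hxy, rfl, rfl⟩ := h
  exact List.append_left_lt (List.cons_lt_cons_iff.2 (Or.inl hxy))

theorem MismatchLT.asymm {f g : List A} (h : MismatchLT f g) : ¬ MismatchLT g f :=
  fun h' => h.lt.asymm h'.lt

theorem MismatchLT.not_prefix_left {f g : List A} (h : MismatchLT f g) : ¬ f <+: g := by
  rintro ⟨t, rfl⟩
  simpa using (h.append [] t []).lt

theorem MismatchLT.not_prefix_right {f g : List A} (h : MismatchLT f g) : ¬ g <+: f := by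
  rintro ⟨t, rfl⟩
  simpa using (h.append [] [] t).lt

theorem mismatchLT_or_gt_or_prefix (f g : List A) :
    MismatchLT f g ∨ MismatchLT g f ∨ f <+: g ∨ g <+: f := by
  induction f generalizing g with
  | nil => simp
  | cons a f ih =>
    cases g with
    | nil => simp
    | cons c g =>
      rcases lt_trichotomy a c with hac | rfl | hca
      · exact Or.inl ⟨[], f, g, a, c, hac, rfl, rfl⟩
      · rcases ih g with h | h | h | h
        · exact Or.inl (h.cons a)
        · exact Or.inr (Or.inl (h.cons a))
        · simp [h]
        · simp [h]
      · exact Or.inr (Or.inl ⟨[], g, f, c, a, hca, rfl, rfl⟩)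

theorem mismatchLT_or_gt_of_length_eq {f g : List A} (hlen : f.length = g.length) (hne : f ≠ g) :
    MismatchLT f g ∨ MismatchLT g f := by
  rcases mismatchLT_or_gt_or_prefix f g with h | h | h | h
  · exact Or.inl h
  · exact Or.inr h
  · exact absurd (h.eq_of_length hlen) hne
  · exact absurd (h.eq_of_length hlen.symm).symm hne

theorem wlt_iff_mismatchLT_of_length_eq {f g : List A} (hlen : f.length = g.length) :
    wlt f g ↔ MismatchLT f g :=
  or_iff_right fun h => h.1 (h.2.eq_of_length hlen.symm)

/-! ### Dominated factors -/

/-- Some factor `a m x` of `f` and some factor `c m y` of `g` with the same inner word `m` satisfy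
`a < c` and `x < y`. -/
def DominatedBy (f g : List A) : Prop :=
  ∃ (m : List A) (a c x y : A), a < c ∧ x < y ∧ a :: (m ++ [x]) <:+: f ∧ c :: (m ++ [y]) <:+: g

theorem DominatedBy.mono {f g f' g' : List A} (h : DominatedBy f g) (hf : f <:+: f')
    (hg : g <:+: g') : DominatedBy f' g' := by
  obtain ⟨m, a, c, x, y, hac, hxy, hf', hg'⟩ := h
  exact ⟨m, a, c, x, y, hac, hxy, hf'.trans hf, hg'.trans hg⟩

theorem DominatedBy.of_mismatchLT {f₁ f₂ g₁ g₂ : List A} (m : List A) (h₁ : MismatchLT f₁ g₁)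
    (h₂ : MismatchLT f₂ g₂) : DominatedBy (f₁.reverse ++ m ++ f₂) (g₁.reverse ++ m ++ g₂) := by
  obtain ⟨p, s, t, a, c, hac, rfl, rfl⟩ := h₁
  obtain ⟨q, u, v, x, y, hxy, rfl, rfl⟩ := h₂
  exact ⟨p.reverse ++ m ++ q, a, c, x, y, hac, hxy, ⟨s.reverse, u, by simp⟩,
    ⟨t.reverse, v, by simp⟩⟩

/-! ### The linear version of `ξ_b` -/

/-- What `ξ_b` inserts between the adjacent letters `a` and `c`; as in `cxi`, the extra letter of a
run of `b` is put in front of it. -/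
def gap (b a c : A) : List A :=
  if (a ≠ b ∧ c = b) ∨ (a < b ∧ c < b) ∨ (b < a ∧ b < c) then [b] else []

/-- What `ξ_b` outputs when it reads the word `f` just after the letter `a`. -/
def xiAfter (b : A) : A → List A → List A
  | _, [] => []
  | a, c :: f => gap b a c ++ c :: xiAfter b c f

/-- The map `ξ_b` on linear words: every maximal run of `b`, including those at the two ends, gets
an extra `b`, which makes the map commute with reversal. -/
def xi (b : A) : List A → List A
  | [] => []
  | a :: f => (if a = b then [b, b] else [a]) ++ xiAfter b a f

theorem xiAfter_append_cons (b a c : A) (f g : List A) :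
    xiAfter b a (f ++ c :: g) = xiAfter b a (f ++ [c]) ++ xiAfter b c g := by
  induction f generalizing a with
  | nil => simp [xiAfter]
  | cons d f ih => simp [xiAfter, ih d]

theorem xiAfter_prefix_append (b a : A) (f g : List A) :
    xiAfter b a f <+: xiAfter b a (f ++ g) := by
  induction f generalizing a with
  | nil => simp [xiAfter]
  | cons c f ih => simpa [xiAfter] using ih c

theorem gap_mismatchLT (b a : A) {x y : A} (hxy : x < y) :
    MismatchLT (gap b a x ++ [x]) (gap b a y ++ [y]) := by
  have head {x y : A} (s t : List A) (h : x < y) : MismatchLT (x :: s) (y :: t) :=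
    ⟨[], s, t, x, y, h, rfl, rfl⟩
  unfold gap
  split_ifs
  · exact (head [] [] hxy).cons b
  all_goals exact head _ _ (by grind)

theorem MismatchLT.map_xiAfter {f g : List A} (h : MismatchLT f g) (b a : A) :
    MismatchLT (xiAfter b a f) (xiAfter b a g) := by
  obtain ⟨p, s, t, x, y, hxy, rfl, rfl⟩ := h
  induction p generalizing a with
  | nil => simpa [xiAfter] using
      (gap_mismatchLT b a hxy).append [] (xiAfter b x s) (xiAfter b y t)
  | cons d p ih => simpa [xiAfter] using ((ih d).cons d).append (gap b a d) [] []

theorem xiAfter_mismatchLT_iff {b a : A} {f g : List A} :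
    MismatchLT (xiAfter b a f) (xiAfter b a g) ↔ MismatchLT f g := by
  refine ⟨fun h => ?_, fun h => h.map_xiAfter b a⟩
  rcases mismatchLT_or_gt_or_prefix f g with hlt | hgt | ⟨s, rfl⟩ | ⟨s, rfl⟩
  · exact hlt
  · exact absurd (hgt.map_xiAfter b a) h.asymm
  · exact absurd (xiAfter_prefix_append b a f s) h.not_prefix_left
  · exact absurd (xiAfter_prefix_append b a g s) h.not_prefix_right

theorem xi_cons_cons (b a c : A) (f : List A) :
    xi b (a :: c :: f) = a :: (gap b c a ++ xi b (c :: f)) := by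
  simp only [xi, xiAfter, gap]
  grind

theorem gap_reverse (b a c : A) : (gap b a c).reverse = gap b a c := by
  unfold gap
  split <;> rfl

theorem xi_append_cons (b c : A) (f g : List A) :
    xi b (f ++ c :: g) = (xiAfter b c f.reverse).reverse ++ xi b [c] ++ xiAfter b c g := by
  induction f with
  | nil => simp [xi, xiAfter]
  | cons a f ih =>
    cases f with
    | nil => simpa [xi_cons_cons, xiAfter, gap_reverse] using ih
    | cons d f =>
      have hd := xiAfter_append_cons b c d f.reverse [a]
      simp only [List.cons_append, List.reverse_cons, List.append_assoc, List.nil_append]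
        at ih hd ⊢
      simp [xi_cons_cons, ih, hd, xiAfter, gap_reverse]

theorem xi_append_cons_of_ne {b c : A} (hc : c ≠ b) (f g : List A) :
    xi b (f ++ c :: g) = (xiAfter b c f.reverse).reverse ++ c :: xiAfter b c g := by
  rw [xi_append_cons]
  simp [xi, xiAfter, hc]

theorem xi_reverse (b : A) (f : List A) : xi b f.reverse = (xi b f).reverse := by
  cases f with
  | nil => rfl
  | cons a f =>
    have hright := xi_append_cons b a f.reverse []
    have hleft := xi_append_cons b a [] f
    have hmid : (xi b [a]).reverse = xi b [a] := by simp only [xi]; split <;> simp [xiAfter]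
    simp_all [xiAfter]

theorem xi_prefix_append (b : A) (f g : List A) : xi b f <+: xi b (f ++ g) := by
  cases f with
  | nil => simp [xi]
  | cons a f => simpa [xi] using xiAfter_prefix_append b a f g

theorem xi_infix {f g : List A} (b : A) (h : f <:+: g) : xi b f <:+: xi b g := by
  obtain ⟨s, t, rfl⟩ := h
  have hsuffix : xi b f <:+ xi b (s ++ f) := by
    have := xi_prefix_append b f.reverse s.reverse
    rwa [← List.reverse_append, xi_reverse, xi_reverse, List.reverse_prefix] at this
  exact hsuffix.isInfix.trans (xi_prefix_append b (s ++ f) t).isInfix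

/-! ### `ξ_b` preserves dominated factors -/

theorem xi_pair (b a x : A) :
    xi b [a, x] = if a < b ∧ b < x ∨ x < b ∧ b < a then [a, x] else [a, b, x] := by
  simp only [xi, xiAfter, gap]
  grind

theorem dominatedBy_xi_pair {a c x y : A} (b : A) (hac : a < c) (hxy : x < y) :
    DominatedBy (xi b [a, x]) (xi b [c, y]) := by
  have of_pair {a c x y : A} {f g : List A} (hac : a < c) (hxy : x < y) (hf : [a, x] <:+: f)
      (hg : [c, y] <:+: g) : DominatedBy f g := ⟨[], a, c, x, y, hac, hxy, hf, hg⟩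
  have left (a x : A) : [a, b] <:+: [a, b, x] := ⟨[], [x], rfl⟩
  have right (a x : A) : [b, x] <:+: [a, b, x] := ⟨[a], [], rfl⟩
  rw [xi_pair, xi_pair]
  split_ifs with hax hcy hcy
  · exact of_pair hac hxy List.infix_rfl List.infix_rfl
  · rcases hax with ⟨hab, -⟩ | ⟨hxb, -⟩
    · exact of_pair hab hxy List.infix_rfl (right c y)
    · exact of_pair hac hxb List.infix_rfl (left c y)
  · rcases hcy with ⟨-, hby⟩ | ⟨-, hbc⟩
    · exact of_pair hac hby (left a x) List.infix_rfl
    · exact of_pair hbc hxy (right a x) List.infix_rfl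
  · exact ⟨[b], a, c, x, y, hac, hxy, List.infix_rfl, List.infix_rfl⟩

theorem DominatedBy.map_xi {f g : List A} (h : DominatedBy f g) (b : A) :
    DominatedBy (xi b f) (xi b g) := by
  obtain ⟨m, a, c, x, y, hac, hxy, hf, hg⟩ := h
  suffices DominatedBy (xi b (a :: (m ++ [x]))) (xi b (c :: (m ++ [y]))) from
    this.mono (xi_infix b hf) (xi_infix b hg)
  cases m with
  | nil => exact dominatedBy_xi_pair b hac hxy
  | cons d m =>
    have hleft : MismatchLT [a] [c] := ⟨[], [], [], a, c, hac, rfl, rfl⟩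
    have hright : MismatchLT (m ++ [x]) (m ++ [y]) := ⟨m, [], [], x, y, hxy, rfl, rfl⟩
    have hout (a : A) (r : List A) := xi_append_cons b d [a] r
    simp only [List.cons_append, List.nil_append, List.reverse_singleton] at hout ⊢
    rw [hout, hout]
    exact .of_mismatchLT _ (hleft.map_xiAfter b d) (hright.map_xiAfter b d)

/-! ### `ξ_b` reflects dominated factors -/

theorem exists_eq_append_cons_of_xiAfter_eq {b c : A} (hc : c ≠ b) {a : A} {f u v : List A}
    (h : xiAfter b a f = u ++ c :: v) : ∃ f₁ f₂, f = f₁ ++ c :: f₂ ∧ xiAfter b c f₂ = v := by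
  induction f generalizing a u with
  | nil => simp [xiAfter] at h
  | cons d f ih =>
    obtain ⟨u', h'⟩ : ∃ u', d :: xiAfter b d f = u' ++ c :: v := by
      have hgap : c ∉ gap b a d := by unfold gap; split <;> simp [hc]
      exact exists_eq_append_cons_of_notMem hgap h
    cases u' with
    | nil =>
      obtain ⟨rfl, hv⟩ := List.cons.inj h'
      exact ⟨[], f, rfl, hv⟩
    | cons e u' =>
      obtain ⟨f₁, f₂, rfl, hv⟩ := ih (List.cons.inj h').2
      exact ⟨d :: f₁, f₂, rfl, hv⟩

theorem exists_eq_append_cons_of_xi_eq {b c : A} (hc : c ≠ b) {f u v : List A}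
    (h : xi b f = u ++ c :: v) :
    ∃ f₁ f₂, f = f₁ ++ c :: f₂ ∧ xiAfter b c f₁.reverse = u.reverse ∧ xiAfter b c f₂ = v := by
  obtain ⟨f₁, f₂, rfl, rfl⟩ : ∃ f₁ f₂, f = f₁ ++ c :: f₂ ∧ xiAfter b c f₂ = v := by
    cases f with
    | nil => simp [xi] at h
    | cons a f =>
      rw [xi] at h
      split at h
      · obtain ⟨u', h'⟩ := exists_eq_append_cons_of_notMem (by simp [hc]) h
        obtain ⟨f₁, f₂, rfl, hv⟩ := exists_eq_append_cons_of_xiAfter_eq hc h'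
        exact ⟨a :: f₁, f₂, rfl, hv⟩
      · cases u with
        | nil =>
          obtain ⟨rfl, hv⟩ := List.cons.inj h
          exact ⟨[], f, rfl, hv⟩
        | cons d u =>
          obtain ⟨f₁, f₂, rfl, hv⟩ := exists_eq_append_cons_of_xiAfter_eq hc (List.cons.inj h).2
          exact ⟨a :: f₁, f₂, rfl, hv⟩
  rw [xi_append_cons_of_ne hc, List.append_left_inj] at h
  exact ⟨f₁, f₂, rfl, by rw [← h, List.reverse_reverse], rfl⟩

theorem dominatedBy_of_xi_of_mem_ne {b c₀ : A} (hc₀ : c₀ ≠ b) {m₁ m₂ f g : List A} {a c x y : A}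
    (hac : a < c) (hxy : x < y) (hf : a :: (m₁ ++ c₀ :: m₂ ++ [x]) <:+: xi b f)
    (hg : c :: (m₁ ++ c₀ :: m₂ ++ [y]) <:+: xi b g) : DominatedBy f g := by
  obtain ⟨s, t, hf⟩ := hf
  obtain ⟨s', t', hg⟩ := hg
  obtain ⟨f₁, f₂, rfl, hf₁, hf₂⟩ := exists_eq_append_cons_of_xi_eq hc₀
    (f := f) (u := s ++ a :: m₁) (v := m₂ ++ x :: t) (by simp [← hf])
  obtain ⟨g₁, g₂, rfl, hg₁, hg₂⟩ := exists_eq_append_cons_of_xi_eq hc₀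
    (f := g) (u := s' ++ c :: m₁) (v := m₂ ++ y :: t') (by simp [← hg])
  have hleft : MismatchLT f₁.reverse g₁.reverse := by
    rw [← xiAfter_mismatchLT_iff (b := b) (a := c₀), hf₁, hg₁]
    exact ⟨m₁.reverse, s.reverse, s'.reverse, a, c, hac, by simp, by simp⟩
  have hright : MismatchLT f₂ g₂ := by
    rw [← xiAfter_mismatchLT_iff (b := b) (a := c₀), hf₂, hg₂]
    exact ⟨m₂, t, t', x, y, hxy, rfl, rfl⟩
  simpa using DominatedBy.of_mismatchLT [c₀] hleft hright

/-- Deletes the last letter of every maximal run of `b`; a left inverse of `xi b`. -/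
def dropRunEnds (b : A) : List A → List A
  | [] => []
  | a :: f => if a = b ∧ f.head? ≠ some b then dropRunEnds b f else a :: dropRunEnds b f

theorem dropRunEnds_suffix_append (b : A) (f g : List A) :
    dropRunEnds b g <:+ dropRunEnds b (f ++ g) := by
  induction f with
  | nil => simp
  | cons a f ih =>
    rw [List.cons_append, dropRunEnds]
    split
    · exact ih
    · exact ih.trans (List.suffix_cons _ _)

theorem head?_xi (b : A) (f : List A) : (xi b f).head? = f.head? := by
  cases f with
  | nil => rfl
  | cons a f => simp only [xi]; split <;> simp_all

theorem dropRunEnds_xi (b : A) (f : List A) : dropRunEnds b (xi b f) = f := by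
  induction f with
  | nil => rfl
  | cons a f ih =>
    cases f with
    | nil => grind [xi, xiAfter, dropRunEnds]
    | cons c f =>
      have hhead := head?_xi b (c :: f)
      rw [xi_cons_cons]
      grind [gap, dropRunEnds]

theorem prefix_dropRunEnds_replicate (b a x : A) (k : ℕ) (t : List A) :
    a :: (List.replicate k b ++ [x]) <+:
      dropRunEnds b (a :: (List.replicate (k + 1) b ++ x :: t)) := by
  induction k generalizing a with
  | zero => by_cases hx : x = b <;> simp [dropRunEnds, hx]
  | succ k ih => simpa [dropRunEnds, List.replicate_succ] using ih b

theorem infix_of_infix_xi_replicate {b a x : A} {k : ℕ} {f : List A}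
    (h : a :: (List.replicate (k + 1) b ++ [x]) <:+: xi b f) :
    a :: (List.replicate k b ++ [x]) <:+: f := by
  obtain ⟨s, t, h⟩ := h
  have hsuffix : dropRunEnds b (a :: (List.replicate (k + 1) b ++ x :: t)) <:+ f := by
    rw [← dropRunEnds_xi b f, ← h]
    simpa using dropRunEnds_suffix_append b s (a :: (List.replicate (k + 1) b ++ x :: t))
  exact (prefix_dropRunEnds_replicate b a x k t).isInfix.trans hsuffix.isInfix

theorem exists_pair_infix_of_pair_infix_xi {b a x : A} {f : List A} (hne : ¬ (a = b ∧ x = b))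
    (h : [a, x] <:+: xi b f) : ∃ a' x', [a', x'] <:+: f ∧ [a, x] <:+: xi b [a', x'] := by
  induction f with
  | nil => simp [xi] at h
  | cons d f ih =>
    cases f with
    | nil =>
      have hb : a = b ∧ x = b := by
        by_cases hd : d = b
        · simpa [xi, xiAfter, hd, List.infix_cons_iff] using h
        · simp [xi, xiAfter, hd, List.infix_cons_iff] at h
      exact absurd hb hne
    | cons c f =>
      obtain ⟨r, hr⟩ : ∃ r, xi b (c :: f) = c :: r := List.head?_eq_some_iff.1 (head?_xi b _)
      rw [xi_cons_cons, hr, ← List.cons_append] at h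
      rcases pair_infix_append_cons h with h | h
      · obtain ⟨s, hs⟩ : ∃ s, xi b [c] = c :: s := List.head?_eq_some_iff.1 (head?_xi b _)
        refine ⟨d, c, ⟨[], f, rfl⟩, h.trans ?_⟩
        rw [xi_cons_cons, hs]
        exact ⟨[], s, by simp⟩
      · obtain ⟨a', x', hf, hxi⟩ := ih (hr ▸ h)
        exact ⟨a', x', List.infix_cons hf, hxi⟩

theorem pair_infix_xi_pair_iff {b a x a' x' : A} :
    [a, x] <:+: xi b [a', x'] ↔
      if a' < b ∧ b < x' ∨ x' < b ∧ b < a' then a = a' ∧ x = x'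
      else a = a' ∧ x = b ∨ a = b ∧ x = x' := by
  rw [xi_pair]
  split <;> simp [List.infix_cons_iff]

theorem dominatedBy_of_pair_infix_xi {b a c x y : A} {f g : List A} (hac : a < c) (hxy : x < y)
    (hf : [a, x] <:+: xi b f) (hg : [c, y] <:+: xi b g) : DominatedBy f g := by
  have not_above (hax : a = b ∧ x = b) : False := by
    obtain ⟨c', y', -, h⟩ := exists_pair_infix_of_pair_infix_xi (by grind) hg
    rw [pair_infix_xi_pair_iff] at h
    grind
  have not_below (hcy : c = b ∧ y = b) : False := by
    obtain ⟨a', x', -, h⟩ := exists_pair_infix_of_pair_infix_xi (by grind) hf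
    rw [pair_infix_xi_pair_iff] at h
    grind
  obtain ⟨a', x', hf', hax⟩ := exists_pair_infix_of_pair_infix_xi not_above hf
  obtain ⟨c', y', hg', hcy⟩ := exists_pair_infix_of_pair_infix_xi not_below hg
  rw [pair_infix_xi_pair_iff] at hax hcy
  have hlt : a' < c' ∧ x' < y' := by grind
  exact ⟨[], a', c', x', y', hlt.1, hlt.2, hf', hg'⟩

theorem dominatedBy_xi_iff {b : A} {f g : List A} :
    DominatedBy (xi b f) (xi b g) ↔ DominatedBy f g := by
  refine ⟨fun ⟨m, a, c, x, y, hac, hxy, hf, hg⟩ => ?_, fun h => h.map_xi b⟩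
  by_cases hm : ∃ c₀ ∈ m, c₀ ≠ b
  · obtain ⟨c₀, hmem, hc₀⟩ := hm
    obtain ⟨m₁, m₂, rfl⟩ := List.append_of_mem hmem
    exact dominatedBy_of_xi_of_mem_ne hc₀ hac hxy hf hg
  · push Not at hm
    obtain ⟨k, rfl⟩ : ∃ k, m = List.replicate k b := ⟨_, List.eq_replicate_of_mem hm⟩
    cases k with
    | zero => exact dominatedBy_of_pair_infix_xi hac hxy hf hg
    | succ k =>
      exact ⟨List.replicate k b, a, c, x, y, hac, hxy, infix_of_infix_xi_replicate hf,
        infix_of_infix_xi_replicate hg⟩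

end LinearOrder

/-! ### Factors of the powers of a word -/

/-- `f` is a factor of some power of `w`, that is, of the bi-infinite periodic word `w^∞`; unlike a
factor of a rotation of `w`, it may be longer than `w`. -/
def PowerFactor (w f : List A) : Prop :=
  ∃ K : ℕ, f <:+: (List.replicate K w).flatten

theorem PowerFactor.mono {w f g : List A} (hf : PowerFactor w f) (hg : g <:+: f) :
    PowerFactor w g :=
  hf.imp fun _ h => hg.trans h

theorem isRot_iff_isRotated {w r : List A} : isRot w r ↔ w ~r r := by
  constructor
  · rintro ⟨s, t, rfl, rfl⟩
    exact List.isRotated_append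
  · rintro ⟨n, rfl⟩
    exact ⟨w.take (n % w.length), w.drop (n % w.length), (List.take_append_drop _ _).symm,
      List.rotate_eq_drop_append_take_mod⟩

theorem PowerFactor.of_isRotated {w r : List A} (h : w ~r r) : PowerFactor w r := by
  obtain ⟨s, t, rfl, rfl⟩ := isRot_iff_isRotated.2 h
  exact ⟨2, s, t, by simp [List.replicate_succ]⟩

theorem flatten_replicate_append_prefix (K : ℕ) (a : A) (r : List A) :
    (List.replicate K (a :: r)).flatten ++ [a] <+: (List.replicate (K + 1) (a :: r)).flatten :=
  ⟨r, by simp [List.replicate_succ']⟩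

theorem flatten_replicate_append_of_conj {a : A} {u v : List A} (h : u ++ [a] = a :: v) (K : ℕ) :
    (List.replicate K u).flatten ++ [a] = a :: (List.replicate K v).flatten := by
  induction K with
  | zero => rfl
  | succ K ih =>
    simp only [List.replicate_succ, List.flatten_cons, List.append_assoc, ih]
    rw [← List.singleton_append, ← List.append_assoc, h, List.cons_append]

section LinearOrder

variable [LinearOrder A]

/-! ### The cyclic `ξ_b` and powers -/

theorem flatMap_zip_append_eq_xiAfter (b a c : A) (r : List A) :
    (((a :: r).zip (r ++ [c])).flatMap fun p =>
        if (p.1 ≠ b ∧ p.2 = b) ∨ (p.1 < b ∧ p.2 < b) ∨ (b < p.1 ∧ b < p.2) then [p.1, b]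
        else [p.1]) ++ [c] =
      a :: xiAfter b a (r ++ [c]) := by
  induction r generalizing a with
  | nil =>
    simp only [List.nil_append, List.zip_cons_cons, List.zip_nil_left, List.flatMap_cons,
      List.flatMap_nil, xiAfter, gap]
    split <;> rfl
  | cons d r ih =>
    rw [List.cons_append, List.zip_cons_cons, List.flatMap_cons, List.append_assoc, ih]
    simp only [xiAfter, gap]
    split <;> simp

theorem cxi_cons_append (b a : A) (r : List A) :
    cxi b (a :: r) ++ [a] = a :: xiAfter b a (r ++ [a]) := by
  rw [cxi, List.rotate_cons_succ, List.rotate_zero]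
  exact flatMap_zip_append_eq_xiAfter b a a r

theorem exists_cxi_cons_eq_cons (b a : A) (r : List A) : ∃ s, cxi b (a :: r) = a :: s := by
  have h := cxi_cons_append b a r
  cases hcxi : cxi b (a :: r) with
  | nil => cases r <;> simp [hcxi, xiAfter] at h
  | cons d s => exact ⟨s, by simp_all⟩

theorem xiAfter_flatten_replicate (b a : A) (r : List A) (K : ℕ) :
    xiAfter b a (List.replicate K (r ++ [a])).flatten =
      (List.replicate K (xiAfter b a (r ++ [a]))).flatten := by
  induction K with
  | zero => rfl
  | succ K ih =>
    simp only [List.replicate_succ, List.flatten_cons, List.append_assoc, List.singleton_append]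
    rw [xiAfter_append_cons, ih]

theorem flatten_replicate_cxi_append (b a : A) (r : List A) (K : ℕ) :
    (List.replicate K (cxi b (a :: r))).flatten ++ [a] =
      a :: xiAfter b a (List.replicate K (r ++ [a])).flatten := by
  rw [xiAfter_flatten_replicate, flatten_replicate_append_of_conj (cxi_cons_append b a r)]

theorem xi_suffix_cons_xiAfter (b a : A) (f : List A) : xi b f <:+ a :: xiAfter b a f := by
  cases f with
  | nil => simp [xi]
  | cons c f =>
    by_cases hc : c = b
    · by_cases ha : a = b
      · exact ⟨[], by simp [xi, xiAfter, gap, ha, hc]⟩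
      · exact ⟨[a], by simp [xi, xiAfter, hc, ha, gap]⟩
    · exact ⟨a :: gap b a c, by simp [xi, xiAfter, hc]⟩

theorem cons_xiAfter_suffix_xi (b a : A) (f : List A) : a :: xiAfter b a f <:+ xi b (a :: f) := by
  rw [xi]
  split
  · next h => exact ⟨[b], by simp [h]⟩
  · exact List.suffix_rfl

theorem PowerFactor.map_xi {w f : List A} (h : PowerFactor w f) (b : A) :
    PowerFactor (cxi b w) (xi b f) := by
  obtain ⟨K, h⟩ := h
  cases w with
  | nil => exact ⟨0, by simp_all [xi]⟩
  | cons a r =>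
    have hshift : (List.replicate K (a :: r)).flatten <:+:
        (List.replicate (K + 1) (r ++ [a])).flatten := by
      have hconj := flatten_replicate_append_of_conj (a := a) (u := a :: r) rfl K
      exact ⟨r, [a], by simp [List.replicate_succ, hconj]⟩
    obtain ⟨s, hs⟩ := exists_cxi_cons_eq_cons b a r
    refine ⟨K + 1 + 1, ?_⟩
    calc xi b f <:+: xi b (List.replicate (K + 1) (r ++ [a])).flatten :=
        xi_infix b (h.trans hshift)
      _ <:+: a :: xiAfter b a (List.replicate (K + 1) (r ++ [a])).flatten :=
        (xi_suffix_cons_xiAfter b a _).isInfix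
      _ = (List.replicate (K + 1) (cxi b (a :: r))).flatten ++ [a] :=
        (flatten_replicate_cxi_append b a r (K + 1)).symm
      _ <:+: (List.replicate (K + 1 + 1) (cxi b (a :: r))).flatten := by
        rw [hs]
        exact (flatten_replicate_append_prefix (K + 1) a s).isInfix

theorem PowerFactor.exists_infix_xi {b : A} {w h : List A} (hh : PowerFactor (cxi b w) h) :
    ∃ f, PowerFactor w f ∧ h <:+: xi b f := by
  obtain ⟨K, hh⟩ := hh
  cases w with
  | nil => exact ⟨[], ⟨0, by simp⟩, by simpa [cxi, xi] using hh⟩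
  | cons a r =>
    refine ⟨(List.replicate K (a :: r)).flatten ++ [a],
      ⟨K + 1, (flatten_replicate_append_prefix K a r).isInfix⟩, ?_⟩
    calc h <:+: (List.replicate K (cxi b (a :: r))).flatten := hh
      _ <:+: (List.replicate K (cxi b (a :: r))).flatten ++ [a] := List.infix_append' [] _ _
      _ = a :: xiAfter b a (List.replicate K (r ++ [a])).flatten :=
        flatten_replicate_cxi_append b a r K
      _ <:+: xi b (a :: (List.replicate K (r ++ [a])).flatten) :=
        (cons_xiAfter_suffix_xi b a _).isInfix
      _ = xi b ((List.replicate K (a :: r)).flatten ++ [a]) := by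
        rw [flatten_replicate_append_of_conj (List.cons_append (as := r))]

/-! ### Obstructions to singularity -/

/-- The periodic word `w^∞` has factors `a m x` and `(c m y)*` with `a < c` and `x < y`. -/
def Obstructed (w : List A) : Prop :=
  ∃ f g : List A, PowerFactor w f ∧ PowerFactor w g.reverse ∧ DominatedBy f g

theorem obstructed_cxi_iff {b : A} {w : List A} : Obstructed (cxi b w) ↔ Obstructed w := by
  constructor
  · rintro ⟨f, g, hf, hg, hfg⟩
    obtain ⟨f', hf', hinf⟩ := hf.exists_infix_xi
    obtain ⟨g', hg', hing⟩ := hg.exists_infix_xi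
    rw [← List.reverse_reverse g', xi_reverse, List.reverse_infix] at hing
    exact ⟨f', g'.reverse, hf', by rwa [List.reverse_reverse],
      dominatedBy_xi_iff.1 (hfg.mono hinf hing)⟩
  · rintro ⟨f, g, hf, hg, hfg⟩
    exact ⟨xi b f, xi b g, hf.map_xi b, xi_reverse b g ▸ hg.map_xi b, hfg.map_xi b⟩

theorem obstructed_of_mismatchLT {w u v : List A} (hw : w ~r u ++ v)
    (hu : MismatchLT u u.reverse) (hv : MismatchLT v.reverse v) : Obstructed w := by
  refine ⟨v ++ u, v.reverse ++ u.reverse, .of_isRotated (hw.trans List.isRotated_append),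
    .of_isRotated (by simpa using hw), ?_⟩
  simpa using DominatedBy.of_mismatchLT [] hv hu

theorem obstructed_of_not_cyclicSingular {w : List A} (h : ¬ cyclicSingular w) :
    Obstructed w := by
  simp only [cyclicSingular, not_forall] at h
  obtain ⟨u, v, -, -, hw, hu, hv, hiff⟩ := h
  rw [isRot_iff_isRotated] at hw
  rw [wlt_iff_mismatchLT_of_length_eq (by simp), wlt_iff_mismatchLT_of_length_eq (by simp)] at hiff
  rcases mismatchLT_or_gt_of_length_eq (by simp) hu with hu' | hu' <;>
    rcases mismatchLT_or_gt_of_length_eq (by simp) hv with hv' | hv'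
  · exact absurd (iff_of_true hu' hv') hiff
  · exact obstructed_of_mismatchLT hw hu' hv'
  · exact obstructed_of_mismatchLT (hw.trans List.isRotated_append) hv' hu'
  · exact absurd (iff_of_false hu'.asymm hv'.asymm) hiff

theorem not_cyclicSingular_of_isRotated {w m z z' : List A} {a c x y : A} (hac : a < c)
    (hxy : x < y) (hw : w ~r a :: (m ++ [x]) ++ z ++ (c :: (m ++ [y])).reverse ++ z') :
    ¬ cyclicSingular w := by
  set u := m ++ x :: (z ++ y :: m.reverse) with hu
  set v := c :: (z' ++ [a]) with hv
  have hmu : MismatchLT u u.reverse :=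
    ⟨m, z ++ y :: m.reverse, z.reverse ++ x :: m.reverse, x, y, hxy, rfl, by simp [hu]⟩
  have hmv : MismatchLT v.reverse v :=
    ⟨[], z'.reverse ++ [c], z' ++ [a], a, c, hac, by simp [hv], rfl⟩
  have hrot : w ~r u ++ v := by
    refine hw.trans ?_
    simpa [hu, hv] using List.isRotated_append (l := [a]) (l' := u ++ c :: z')
  intro h
  have hiff := h u v (by simp [hu]) (by simp [hv]) (isRot_iff_isRotated.2 hrot) hmu.lt.ne
    hmv.lt.ne'
  rw [wlt_iff_mismatchLT_of_length_eq (by simp), wlt_iff_mismatchLT_of_length_eq (by simp)] at hiff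
  exact hmv.asymm (hiff.1 hmu)

end LinearOrder

/-! ### Windows of periodic sequences -/

/-- The factor of length `L` starting at position `i` of the bi-infinite word `W`. -/
def window (W : ℤ → A) (i : ℤ) (L : ℕ) : List A :=
  (List.range L).map fun t : ℕ => W (i + t)

section window

variable {W : ℤ → A}

theorem length_window (W : ℤ → A) (i : ℤ) (L : ℕ) : (window W i L).length = L := by
  simp [window]

theorem getElem_window (i : ℤ) {L t : ℕ} (ht : t < (window W i L).length) :
    (window W i L)[t] = W (i + t) := by
  simp [window]

theorem window_add (W : ℤ → A) (i : ℤ) (L L' : ℕ) :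
    window W i (L + L') = window W i L ++ window W (i + L) L' := by
  simp [window, List.range_add, add_assoc]

theorem eq_window_of_infix {f : List A} {i : ℤ} {L : ℕ} (h : f <:+: window W i L) :
    ∃ j, f = window W j f.length := by
  obtain ⟨s, t, h⟩ := h
  have hlen : L = s.length + f.length + t.length := by
    simpa [length_window, add_assoc] using (congrArg List.length h).symm
  rw [hlen, window_add, window_add] at h
  have hsf := List.append_inj_left h (by simp [length_window])
  exact ⟨i + s.length, List.append_inj_right hsf (by simp [length_window])⟩

theorem ends_eq_of_cons_append_eq_window {a x : A} {m : List A} {i : ℤ} {L : ℕ}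
    (h : a :: (m ++ [x]) = window W i L) : W i = a ∧ W (i + (m.length + 1 : ℕ)) = x := by
  have hget (t : ℕ) (ht : t < (a :: (m ++ [x])).length) : (a :: (m ++ [x]))[t] = W (i + t) := by
    simp only [h, getElem_window]
  exact ⟨by simpa using (hget 0 (by simp)).symm,
    by simpa using (hget (m.length + 1) (by simp)).symm⟩

variable {n : ℕ}

theorem window_add_int_mul (hW : Function.Periodic W n) (i z : ℤ) (L : ℕ) :
    window W (i + z * n) L = window W i L := by
  have hperiod : Function.Periodic W (z * n) := hW.int_mul z
  simp only [window, add_right_comm i (z * n), hperiod _]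

theorem flatten_replicate_window (hW : Function.Periodic W n) (K : ℕ) :
    (List.replicate K (window W 0 n)).flatten = window W 0 (K * n) := by
  induction K with
  | zero => simp [window]
  | succ K ih =>
    have hperiod := window_add_int_mul hW 0 K n
    rw [List.replicate_succ', List.flatten_append, ih, add_mul, one_mul, window_add]
    push_cast
    rw [hperiod, List.flatten_singleton]

theorem window_add_one_isRotated (hW : Function.Periodic W n) (i : ℤ) :
    window W (i + 1) n ~r window W i n := by
  cases n with
  | zero => rfl
  | succ n =>
    have hleft : window W i (n + 1) = [W i] ++ window W (i + 1) n := by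
      rw [add_comm n, window_add]
      simp [window]
    have hright : window W (i + 1) (n + 1) = window W (i + 1) n ++ [W i] := by
      rw [window_add, ← hW i]
      simp [window, add_assoc, add_comm (1 : ℤ)]
    rw [hleft, hright]
    exact List.isRotated_append

theorem window_isRotated_window_zero (hW : Function.Periodic W n) (i : ℤ) :
    window W i n ~r window W 0 n := by
  induction i using Int.induction_on with
  | zero => rfl
  | succ i ih => exact (window_add_one_isRotated hW i).trans ih
  | pred i ih =>
    have hstep := window_add_one_isRotated hW (-i - 1)
    rw [sub_add_cancel] at hstep
    exact hstep.symm.trans ih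

-- A strict inequality at `j`, reflected back into the interval modulo `n`, would be reversed.
theorem add_int_mul_notMem_Icc_of_reflection_le [Preorder A]
    (hW : Function.Periodic W n) {i k l j : ℤ}
    (hle : ∀ j ∈ Set.Icc i (i + l), W j ≤ W (i + k + l - j)) (hj : W j < W (i + k + l - j))
    (z : ℤ) : i + k + l - j + z * n ∉ Set.Icc i (i + l) := by
  intro hmem
  have hperiod : Function.Periodic W (z * n) := hW.int_mul z
  have hreflect := hle _ hmem
  rw [hperiod _, show i + k + l - (i + k + l - j + z * n) = j - z * n by ring,
    hperiod.sub_eq] at hreflect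
  exact hj.not_ge hreflect

theorem exists_disjoint_translate_of_reflection_le [Preorder A]
    (hW : Function.Periodic W n) (hn : 0 < n) {i k l : ℤ}
    (hle : ∀ j ∈ Set.Icc i (i + l), W j ≤ W (i + k + l - j)) (hfirst : W i < W (k + l))
    (hlast : W (i + l) < W k) : ∃ z : ℤ, i + l < k + z * n ∧ k + z * n + l < i + n := by
  obtain ⟨z, ⟨hlow, hhigh⟩, -⟩ :=
    existsUnique_add_zsmul_mem_Ico (Int.natCast_pos.2 hn) k i
  rw [smul_eq_mul] at hlow hhigh
  have hk := add_int_mul_notMem_Icc_of_reflection_le hW hle (j := i + l)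
    (by convert hlast using 2; ring) z
  have hkl := add_int_mul_notMem_Icc_of_reflection_le hW hle (j := i)
    (by convert hfirst using 2; ring) (z - 1)
  simp only [Set.mem_Icc, sub_mul, one_mul] at hk hkl
  refine ⟨z, ?_, ?_⟩ <;> grind

end window

theorem exists_periodic_window_eq {w : List A} (hw : w ≠ []) :
    ∃ W : ℤ → A, Function.Periodic W w.length ∧ window W 0 w.length = w := by
  have hpos : (0 : ℤ) < w.length := by simpa using List.length_pos_iff.2 hw
  have hlt (j : ℤ) : (j % w.length).toNat < w.length := by
    have := Int.emod_lt_of_pos j hpos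
    have := Int.emod_nonneg j hpos.ne'
    omega
  refine ⟨fun j => w[(j % w.length).toNat]'(hlt j), fun j => by simp, ?_⟩
  refine List.ext_getElem (length_window _ _ _) fun t _ ht => ?_
  simp [getElem_window, ← Int.natCast_mod, Nat.mod_eq_of_lt ht]

theorem PowerFactor.exists_eq_window {W : ℤ → A} {n : ℕ} (hW : Function.Periodic W n) {f : List A}
    (h : PowerFactor (window W 0 n) f) : ∃ i, f = window W i f.length := by
  obtain ⟨K, h⟩ := h
  rw [flatten_replicate_window hW] at h
  exact eq_window_of_infix h

theorem reflection_le_of_forall₂ [Preorder A] {W : ℤ → A} {f g : List A} {i k : ℤ} {l : ℕ}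
    (hf : f = window W i (l + 1)) (hg : g.reverse = window W k (l + 1))
    (hfg : List.Forall₂ (· ≤ ·) f g) :
    ∀ j ∈ Set.Icc i (i + l), W j ≤ W (i + k + l - j) := by
  rintro j ⟨hij, hjl⟩
  obtain ⟨t, rfl⟩ := Int.le.dest hij
  have hflen : f.length = l + 1 := by rw [hf, length_window]
  have hglen : g.length = l + 1 := by rw [← List.length_reverse, hg, length_window]
  have hft : f[t]'(by omega) = W (i + t) := by simp only [hf, getElem_window]
  have hgt : g[t]'(by omega) = W (i + k + l - (i + t)) := by
    have hrev : g = (window W k (l + 1)).reverse := by rw [← hg, List.reverse_reverse]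
    simp only [hrev, List.getElem_reverse, getElem_window, length_window]
    congr 1
    omega
  rw [← hft, ← hgt]
  exact hfg.get (by omega) (by omega)

theorem exists_isRotated_append_of_forall₂ [Preorder A] {W : ℤ → A} {n l : ℕ}
    (hW : Function.Periodic W n) (hn : 0 < n) {f g : List A} {i k : ℤ}
    (hf : f = window W i (l + 1)) (hg : g.reverse = window W k (l + 1))
    (hfg : List.Forall₂ (· ≤ ·) f g) (hfirst : W i < W (k + l)) (hlast : W (i + l) < W k) :
    ∃ z z', window W 0 n ~r f ++ z ++ g.reverse ++ z' := by
  obtain ⟨q, hlow, hhigh⟩ := exists_disjoint_translate_of_reflection_le hW hn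
    (reflection_le_of_forall₂ hf hg hfg) hfirst hlast
  obtain ⟨s, hs⟩ := Int.le.dest (Int.add_one_le_of_lt hlow)
  obtain ⟨t, ht⟩ := Int.le.dest (Int.add_one_le_of_lt hhigh)
  have hpos : k + q * n = i + (l + 1 + s : ℕ) := by omega
  have hn_split : n = l + 1 + s + (l + 1) + t := by omega
  have hg' : g.reverse = window W (i + (l + 1 + s : ℕ)) (l + 1) := by
    rw [hg, ← hpos, window_add_int_mul hW]
  refine ⟨window W (i + (l + 1 : ℕ)) s, window W (i + (l + 1 + s + (l + 1) : ℕ)) t, ?_⟩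
  rw [hf, hg', ← window_add, ← window_add, ← window_add, ← hn_split]
  exact (window_isRotated_window_zero hW i).symm

theorem Obstructed.exists_isRotated [LinearOrder A] {w : List A} (h : Obstructed w) :
    ∃ (m z z' : List A) (a c x y : A), a < c ∧ x < y ∧
      w ~r a :: (m ++ [x]) ++ z ++ (c :: (m ++ [y])).reverse ++ z' := by
  obtain ⟨f, g, hf, hg, m, a, c, x, y, hac, hxy, hax, hcy⟩ := h
  have hw : w ≠ [] := by
    rintro rfl
    obtain ⟨K, hK⟩ := hf.mono hax
    simp at hK
  obtain ⟨W, hW, hwW⟩ := exists_periodic_window_eq hw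
  rw [← hwW] at hf hg
  obtain ⟨i, hi⟩ := (hf.mono hax).exists_eq_window hW
  obtain ⟨k, hk⟩ := (hg.mono (List.reverse_infix.2 hcy)).exists_eq_window hW
  have hle : List.Forall₂ (· ≤ ·) (a :: (m ++ [x])) (c :: (m ++ [y])) :=
    .cons hac.le (List.rel_append (List.forall₂_same.2 fun _ _ => le_rfl)
      (.cons hxy.le .nil))
  obtain ⟨hWa, hWx⟩ := ends_eq_of_cons_append_eq_window hi
  obtain ⟨hWy, hWc⟩ : W k = y ∧ W (k + (m.length + 1 : ℕ)) = c := by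
    rw [← List.length_reverse]
    exact ends_eq_of_cons_append_eq_window (by simpa using hk)
  obtain ⟨z, z', hrot⟩ := exists_isRotated_append_of_forall₂ hW (List.length_pos_iff.2 hw)
    (l := m.length + 1) (by simpa using hi) (by simpa using hk) hle
    (by rwa [hWa, hWc]) (by rwa [hWx, hWy])
  exact ⟨m, z, z', a, c, x, y, hac, hxy, hwW ▸ hrot⟩

theorem cyclicSingular_iff_not_obstructed [LinearOrder A] {w : List A} :
    cyclicSingular w ↔ ¬ Obstructed w := by
  refine ⟨fun hw h => ?_, fun h => by_contra fun hw => h (obstructed_of_not_cyclicSingular hw)⟩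
  obtain ⟨m, z, z', a, c, x, y, hac, hxy, hrot⟩ := h.exists_isRotated
  exact not_cyclicSingular_of_isRotated hac hxy hrot hw

end Words

theorem stmt17_general {A : Type*} [LinearOrder A] (b : A) (w : List A) :
    cyclicSingular w ↔ cyclicSingular (cxi b w) := by
  rw [cyclicSingular_iff_not_obstructed, cyclicSingular_iff_not_obstructed, obstructed_cxi_iff]

theorem stmt17 {A : Type*} [LinearOrder A] [Fintype A] (b : A) (w : List A)
    (hδ : deltaW w b ≠ 0) :
    cyclicSingular w ↔ cyclicSingular (cxi b w) :=
  stmt17_general b w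
end

section
/- Let A be a finite ordered alphabet with largest letter j, and x a nonempty word over A \ {j}. Then the cyclic word represented by xj is singular if and only if for every factorization x = u* v w (u, v, w possibly empty) with v ≠ v* and u ≠ w, one has v ≺ v* if and only if w ≺ u. -/
/-!
Since `j` exceeds every letter of `x` and a word precedes its proper prefixes, `j` acts as an end
marker: appending `j` and anything after it does not change how two distinct words over smaller
letters compare. In a factorization of the cyclic word `x j` into two words, exactly one factor
contains this `j`, so the factors are `v` and `w j u*` with `x = u* v w`. As `(w j u*)* = u j w*`,
comparing the second factor with its reversal amounts to comparing `w` with `u`.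
-/

section Order

variable {A : Type*} [LinearOrder A]

theorem cons_wlt_nil (a : A) (u : List A) : wlt (a :: u) [] :=
  Or.inl ⟨(List.cons_ne_nil a u).symm, List.nil_prefix⟩

theorem not_nil_wlt (v : List A) : ¬ wlt [] v := by
  rintro (⟨hne, hprefix⟩ | ⟨p, s, t, a, b, -, hnil, -⟩)
  · exact hne (List.prefix_nil.mp hprefix)
  · simp at hnil

theorem wlt_cons_cons_iff {a b : A} {u v : List A} :
    wlt (a :: u) (b :: v) ↔ a < b ∨ a = b ∧ wlt u v := by
  constructor
  · rintro (⟨hne, hprefix⟩ | ⟨_ | ⟨c, p⟩, s, t, y, z, hyz, hu, hv⟩)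
    · obtain ⟨rfl, htail⟩ := List.cons_prefix_cons.mp hprefix
      exact Or.inr ⟨rfl, Or.inl ⟨fun h => hne (h ▸ rfl), htail⟩⟩
    · obtain ⟨rfl, -⟩ := List.cons.inj hu
      obtain ⟨rfl, -⟩ := List.cons.inj hv
      exact Or.inl hyz
    · obtain ⟨rfl, hutail⟩ := List.cons.inj hu
      obtain ⟨rfl, hvtail⟩ := List.cons.inj hv
      exact Or.inr ⟨rfl, Or.inr ⟨p, s, t, y, z, hyz, hutail, hvtail⟩⟩
  · rintro (hab | ⟨rfl, ⟨hne, hprefix⟩ | ⟨p, s, t, y, z, hyz, rfl, rfl⟩⟩)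
    · exact Or.inr ⟨[], u, v, a, b, hab, rfl, rfl⟩
    · exact Or.inl ⟨by simpa using hne, by simpa using hprefix⟩
    · exact Or.inr ⟨a :: p, s, t, y, z, hyz, rfl, rfl⟩

theorem append_cons_wlt_append_cons_iff {j : A} {u w : List A} (hw : ∀ c ∈ w, c < j)
    (hu : ∀ c ∈ u, c < j) (hne : w ≠ u) (s t : List A) :
    wlt (w ++ j :: s) (u ++ j :: t) ↔ wlt w u := by
  induction w generalizing u with
  | nil =>
    obtain ⟨c, u, rfl⟩ := List.exists_cons_of_ne_nil hne.symm
    have hcj : c < j := hu c List.mem_cons_self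
    simp [wlt_cons_cons_iff, not_nil_wlt, hcj.le, hcj.ne']
  | cons d w ih =>
    obtain ⟨hdj, hwtail⟩ := List.forall_mem_cons.mp hw
    cases u with
    | nil => simp [wlt_cons_cons_iff, cons_wlt_nil, hdj]
    | cons c u =>
      have hutail : ∀ c ∈ u, c < j := (List.forall_mem_cons.mp hu).2
      simp only [List.cons_append, wlt_cons_cons_iff]
      refine or_congr_right (and_congr_right ?_)
      rintro rfl
      exact ih hwtail hutail fun h => hne (h ▸ rfl)

theorem wlt_reverse_append_cons_reverse_iff {j : A} {u w : List A} (hw : ∀ c ∈ w, c < j)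
    (hu : ∀ c ∈ u, c < j) (hne : w ≠ u) :
    wlt (w ++ j :: u.reverse) (w ++ j :: u.reverse).reverse ↔ wlt w u := by
  simpa using append_cons_wlt_append_cons_iff hw hu hne u.reverse w.reverse

end Order

section Factorization

variable {A : Type*}

theorem append_cons_reverse_eq_reverse_iff {j : A} {u w : List A} (hw : j ∉ w) (hu : j ∉ u) :
    w ++ j :: u.reverse = (w ++ j :: u.reverse).reverse ↔ w = u := by
  simp only [List.reverse_append, List.reverse_cons, List.reverse_reverse, List.append_assoc,
    List.singleton_append]
  rw [List.append_cons_inj_of_notMem hw (List.mem_reverse.not.mpr hu)]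
  exact ⟨And.left, by rintro rfl; simp⟩

theorem isRot_append_singleton_iff {x r : List A} {j : A} :
    isRot (x ++ [j]) r ↔ ∃ s t, x = s ++ t ∧ r = t ++ j :: s := by
  constructor
  · rintro ⟨s, t, hst, rfl⟩
    rcases List.eq_nil_or_concat t with rfl | ⟨t, c, rfl⟩
    · exact ⟨[], x, rfl, by simpa using hst.symm⟩
    · rw [List.concat_eq_append, ← List.append_assoc] at hst
      obtain ⟨rfl, hjc⟩ := List.append_inj' hst rfl
      obtain rfl : j = c := List.singleton_inj.mp hjc
      exact ⟨s, t, rfl, by simp⟩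
  · rintro ⟨s, t, rfl, rfl⟩
    exact ⟨s, t ++ [j], by simp, by simp⟩

theorem append_eq_append_cons_iff {j : A} {U V s t : List A} :
    U ++ V = t ++ j :: s ↔
      (∃ w, t = U ++ w ∧ V = w ++ j :: s) ∨ ∃ p, s = p ++ V ∧ U = t ++ j :: p := by
  constructor
  · intro h
    rcases List.append_eq_append_iff.mp h with ⟨w, ht, hV⟩ | ⟨q, hU, hq⟩
    · exact Or.inl ⟨w, ht, hV⟩
    · rcases List.cons_eq_append_iff.mp hq with ⟨rfl, hV⟩ | ⟨p, rfl, hs⟩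
      · exact Or.inl ⟨[], by simpa using hU.symm, hV⟩
      · exact Or.inr ⟨p, hs, hU⟩
  · rintro (⟨w, rfl, rfl⟩ | ⟨p, rfl, rfl⟩) <;> simp

theorem isRot_append_singleton_append_iff {x U V : List A} {j : A} :
    isRot (x ++ [j]) (U ++ V) ↔
      (∃ s w, x = s ++ U ++ w ∧ V = w ++ j :: s) ∨ ∃ s w, x = s ++ V ++ w ∧ U = w ++ j :: s := by
  simp only [isRot_append_singleton_iff, append_eq_append_cons_iff]
  grind

end Factorization

theorem cyclicSingular_append_singleton_iff {A : Type*} [LinearOrder A] {j : A} {x : List A} :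
    cyclicSingular (x ++ [j]) ↔
      ∀ s v w : List A, x = s ++ v ++ w → v ≠ v.reverse →
        w ++ j :: s ≠ (w ++ j :: s).reverse →
        (wlt v v.reverse ↔ wlt (w ++ j :: s) (w ++ j :: s).reverse) := by
  constructor
  · intro hsing s v w hx hv hws
    have hrot : isRot (x ++ [j]) (v ++ (w ++ j :: s)) :=
      isRot_append_singleton_append_iff.mpr (Or.inl ⟨s, w, hx, rfl⟩)
    exact hsing v (w ++ j :: s) (by rintro rfl; simp at hv) (by simp) hrot hv hws
  · intro hsync U V _ _ hrot hU hV
    rcases isRot_append_singleton_append_iff.mp hrot with ⟨s, w, hx, rfl⟩ | ⟨s, w, hx, rfl⟩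
    · exact hsync s U w hx hU hV
    · exact (hsync s V w hx hV hU).symm

theorem stmt18 {A : Type*} [LinearOrder A] (j : A) (x : List A)
    (hx : x ≠ []) (hlt : ∀ c ∈ x, c < j) :
    cyclicSingular (x ++ [j]) ↔
      ∀ u v w : List A, x = u.reverse ++ v ++ w → v ≠ v.reverse → u ≠ w →
        (wlt v v.reverse ↔ wlt w u) := by
  refine (cyclicSingular_append_singleton_iff.trans List.reverse_surjective.forall).trans ?_
  refine forall₄_congr fun u v w hfact => imp_congr_right fun _ => ?_
  have hu : ∀ c ∈ u, c < j := fun c hc => hlt c (by simp [hfact, hc])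
  have hw : ∀ c ∈ w, c < j := fun c hc => hlt c (by simp [hfact, hc])
  have hpal : w ++ j :: u.reverse = (w ++ j :: u.reverse).reverse ↔ w = u :=
    append_cons_reverse_eq_reverse_iff (fun h => (hw j h).false) fun h => (hu j h).false
  refine imp_congr_ctx (hpal.not.trans ne_comm) fun hne => ?_
  rw [wlt_reverse_append_cons_reverse_iff hw hu hne.symm]
end
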